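/- arXiv:1106.0082 — 2 statements merged into one kernel-verified Lean document; each statement's English description precedes it below -/
import Mathlib

section
/- Let k ∈ ℤ≥0 and let F be a linearly closed differential field of characteristic zero. Let K be an ℓ×ℓ matrix differential operator over F of order N with invertible leading coefficient. Then for every totally skewsymmetric k-differential operator S on F^ℓ there exists a skewsymmetric k-differential operator P on F^ℓ such that ⟨K∘P⟩⁻ = S. -/
/-- A derivation on a field: an additive map satisfying the Leibniz rule. -/
structure IsDerivation {F : Type*} [Field F] (d : F → F) : Prop where
  map_add : ∀ a b : F, d (a + b) = d a + d b
  leibniz : ∀ a b : F, d (a * b) = d a * b + a * d b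

/-- A differential field `(F, d)` is linearly closed if every linear differential equation
`a_M d^M u + ⋯ + a_1 d u + a_0 u = b` with `a_M ≠ 0` has a solution in `F`,
and has a nonzero solution for `b = 0`, provided that `M ≥ 1`. -/
def LinearlyClosed {F : Type*} [Field F] (d : F → F) : Prop :=
  ∀ (M : ℕ) (a : ℕ → F), a M ≠ 0 →
    (∀ b : F, ∃ u : F, ∑ n ∈ Finset.range (M + 1), a n * d^[n] u = b) ∧
    (1 ≤ M → ∃ u : F, u ≠ 0 ∧ ∑ n ∈ Finset.range (M + 1), a n * d^[n] u = 0)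

/-- The derivation `∂̂` of `F[λ_1,…,λ_k]` acting as `d` on coefficients and annihilating
the variables. -/
noncomputable def coeffDer {F : Type*} [Field F] (d : F → F) {k : ℕ}
    (Q : MvPolynomial (Fin k) F) : MvPolynomial (Fin k) F :=
  ∑ m ∈ Q.support, (MvPolynomial.monomial m) (d (MvPolynomial.coeff m Q))

/-- `Λ₀(Q) = −(λ_1+⋯+λ_k)·Q − ∂̂(Q)`. -/
noncomputable def lamZero {F : Type*} [Field F] (d : F → F) {k : ℕ} :
    MvPolynomial (Fin k) F → MvPolynomial (Fin k) F :=
  fun Q => -((∑ a : Fin k, MvPolynomial.X a) * Q) - coeffDer d Q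

/-- `E(Q) = (λ_1+⋯+λ_k)·Q + ∂̂(Q)`. -/
noncomputable def eOp {F : Type*} [Field F] (d : F → F) {k : ℕ} :
    MvPolynomial (Fin k) F → MvPolynomial (Fin k) F :=
  fun Q => (∑ a : Fin k, MvPolynomial.X a) * Q + coeffDer d Q

/-- A `k`-differential operator on `F^ℓ` is skewsymmetric if the simultaneous action of
`S_k` on the indices `i_1,…,i_k` and the variables `λ_1,…,λ_k` is by the sign
character. -/
def IsSkewsym {F : Type*} [Field F] {k l : ℕ}
    (P : (Fin (k + 1) → Fin l) → MvPolynomial (Fin k) F) : Prop :=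
  ∀ (σ : Equiv.Perm (Fin k)) (i : Fin (k + 1) → Fin l),
    MvPolynomial.rename σ (P (Fin.cons (i 0) (fun a => i (Fin.succ (σ a)))))
      = (Equiv.Perm.sign σ : ℤ) • P i

/-- The operation `P ↦ P^{τ_α}`: expand `P_{i_α,i_1,…,i_0,…,i_k} = Σ_n p_n λ^n` and
replace the power `λ_α^{n_α}` by an application of `Λ₀^{n_α}`. -/
noncomputable def tauAct {F : Type*} [Field F] (d : F → F) {k l : ℕ} (α : Fin k)
    (P : (Fin (k + 1) → Fin l) → MvPolynomial (Fin k) F)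
    (i : Fin (k + 1) → Fin l) : MvPolynomial (Fin k) F :=
  ∑ m ∈ (P (fun j => i (Equiv.swap 0 α.succ j))).support,
    (lamZero d)^[m α]
      ((MvPolynomial.monomial (Finsupp.erase α m))
        (MvPolynomial.coeff m (P (fun j => i (Equiv.swap 0 α.succ j)))))

/-- The total skewsymmetrization `⟨P⟩⁻ = (1/(k+1)) (P − Σ_{α=1}^k P^{τ_α})` of a
skewsymmetric `k`-differential operator. -/
noncomputable def totSkew {F : Type*} [Field F] (d : F → F) {k l : ℕ}
    (P : (Fin (k + 1) → Fin l) → MvPolynomial (Fin k) F) :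
    (Fin (k + 1) → Fin l) → MvPolynomial (Fin k) F :=
  fun i => (((k : F) + 1)⁻¹) • (P i - ∑ α : Fin k, tauAct d α P i)

/-- `(K∘P)_{i_0,i_1,…,i_k} = Σ_j Σ_{n=0}^N K_{i_0 j,n} · E^n (P_{j,i_1,…,i_k})`. -/
noncomputable def kCirc {F : Type*} [Field F] (d : F → F) {k l : ℕ} (N : ℕ)
    (K : Fin l → Fin l → ℕ → F)
    (P : (Fin (k + 1) → Fin l) → MvPolynomial (Fin k) F) :
    (Fin (k + 1) → Fin l) → MvPolynomial (Fin k) F :=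
  fun i => ∑ j : Fin l, ∑ n ∈ Finset.range (N + 1),
    MvPolynomial.C (K (i 0) j n) * (eOp d)^[n] (P (Function.update i 0 j))

/-!
Restoring a variable `λ₀` to a `k`-differential operator turns it into an array on which all of
`S_{k+1}` acts. Eliminating `λ₀` by `λ₀ ↦ -(λ₁ + ⋯ + λₖ) - ∂̂` kills exactly the total derivatives
`(λ₀ + ⋯ + λₖ) Q + ∂̂ Q`, and intertwines antisymmetrization over `S_{k+1}` with total
skewsymmetrization. It is therefore enough to write every array as a total derivative, plus an
array which has the same antisymmetrization as one whose reduction is of the form `K ∘ P`.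

Consider the arrays all of whose multiples by polynomials in `λ₁, …, λₖ` reduce to operators of
this form. Since the leading coefficient of `K` is invertible, modulo lower degree they contain
every monomial divisible by `λ₀ᴺ`, so their `S_{k+1}`-translates span a subspace of finite
codimension. Then some nonzero differential operator applied to a given array lands in this
subspace; integrating by parts and solving the adjoint equation writes the array as required.
-/

section LinearEquations

open Finset

/-- A field with an operator `d` is linearly surjective if every nonzero linear differential
operator in `d` is surjective on it. Unlike `LinearlyClosed`, this asks for no nonzero solutions of
homogeneous equations. -/
def IsLinearlySurjective {F : Type*} [Field F] (d : F → F) : Prop :=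
  ∀ (M : ℕ) (a : ℕ → F), a M ≠ 0 → ∀ b : F, ∃ u : F, ∑ n ∈ range (M + 1), a n * d^[n] u = b

theorem LinearlyClosed.isLinearlySurjective {F : Type*} [Field F] {d : F → F}
    (hd : LinearlyClosed d) : IsLinearlySurjective d :=
  fun M a ha => (hd M a ha).1

theorem IsDerivation.exists_derivation_coe_eq {F : Type*} [Field F] {d : F → F}
    (hd : IsDerivation d) : ∃ D : Derivation ℤ F F, ⇑D = d :=
  ⟨Derivation.mk' (AddMonoidHom.mk' d hd.map_add).toIntLinearMap fun a b => by
    simpa [mul_comm, add_comm] using hd.leibniz a b, rfl⟩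

variable {R : Type*} [CommRing R] (D : Derivation ℤ R R)

theorem derivation_iterate_mul (n : ℕ) (a b : R) :
    D^[n] (a * b) = ∑ i ∈ range (n + 1), n.choose i * (D^[i] a * D^[n - i] b) := by
  rw [← Nat.sum_antidiagonal_eq_sum_range_succ fun i j => (n.choose i : R) * (D^[i] a * D^[j] b)]
  induction n with
  | zero => simp
  | succ n ih =>
    rw [sum_antidiagonal_choose_succ_mul fun i j => D^[i] a * D^[j] b]
    simp only [Function.iterate_succ_apply', ih, map_sum, ← nsmul_eq_mul, map_nsmul,
      Derivation.leibniz, smul_eq_mul, nsmul_add, sum_add_distrib]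
    simp only [mul_comm]
    congr 1
    refine sum_congr rfl fun ij hij => ?_
    rw [Nat.choose_symm_of_eq_add (mem_antidiagonal.mp hij).symm]

theorem exists_coeff_adjoint (M : ℕ) (a : ℕ → R) :
    ∃ c : ℕ → R, c M = (-1) ^ M * a M ∧ ∀ y,
      ∑ n ∈ range (M + 1), (-1) ^ n * D^[n] (y * a n) = ∑ i ∈ range (M + 1), c i * D^[i] y := by
  refine ⟨fun i => ∑ n ∈ range (M + 1), (-1) ^ n * (n.choose i * D^[n - i] (a n)), ?_,
    fun y => ?_⟩
  · beta_reduce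
    rw [sum_range_succ, sum_eq_zero fun n hn => ?_]
    · simp
    · rw [Nat.choose_eq_zero_of_lt (mem_range.mp hn)]
      simp
  · simp only [sum_mul]
    rw [sum_comm]
    refine sum_congr rfl fun n hn => ?_
    rw [derivation_iterate_mul, mul_sum]
    refine sum_subset_zero_on_sdiff (range_subset_range.mpr (mem_range.mp hn)) (fun i hi => ?_)
      fun i _ => by ring
    rw [Nat.choose_eq_zero_of_lt (by simpa using (mem_sdiff.mp hi).2)]
    simp

variable {V : Type*} [AddCommGroup V] [Module R V]

theorem smul_iterate_sub_mem_range {δ : V →+ V} (hδ : ∀ (f : R) v, δ (f • v) = D f • v + f • δ v)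
    (n : ℕ) (f : R) (v : V) : f • δ^[n] v - ((-1) ^ n * D^[n] f) • v ∈ δ.range := by
  induction n generalizing f with
  | zero => simp
  | succ n ih =>
    have hstep : f • δ^[n + 1] v + D f • δ^[n] v ∈ δ.range :=
      ⟨f • δ^[n] v, by rw [hδ, Function.iterate_succ_apply', add_comm]⟩
    convert sub_mem hstep (ih (D f)) using 1
    rw [Function.iterate_succ_apply, Function.iterate_succ_apply, pow_succ, mul_neg_one, neg_mul]
    module

theorem exists_sum_range_smul_mem [Nontrivial R] (W : Submodule R V) [Module.Finite R (V ⧸ W)]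
    (x : ℕ → V) :
    ∃ (M : ℕ) (g : ℕ → R), g M ≠ 0 ∧ ∑ n ∈ range (M + 1), g n • x n ∈ W := by
  have hdep : ¬ LinearIndependent R (W.mkQ ∘ x) := fun h => Infinite.not_finite h.finite
  obtain ⟨p, hp, hp0⟩ : ∃ p : ℕ →₀ R, Finsupp.linearCombination R (W.mkQ ∘ x) p = 0 ∧ p ≠ 0 := by
    simpa [linearIndependent_iff] using hdep
  set M := p.support.max' (Finsupp.support_nonempty_iff.mpr hp0)
  refine ⟨M, p, Finsupp.mem_support_iff.mp (max'_mem _ _), ?_⟩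
  rw [← Submodule.Quotient.mk_eq_zero, ← Submodule.mkQ_apply, map_sum, ← hp,
    Finsupp.linearCombination_apply,
    Finsupp.sum_of_support_subset p (s := range (M + 1)) _ _ (by simp)]
  · simp
  · exact fun n hn => mem_range_succ_iff.mpr (le_max' _ n hn)

/- If `∑ gₙ δⁿ v ∈ W`, then multiplying by `y` and integrating by parts moves the operator
onto `y`: modulo `δ V + W` the vector `L*(y) v` vanishes, where `L*` is the adjoint of `∑ gₙ ∂ⁿ`.
Now solve `L*(y) = 1`. -/
theorem IsLinearlySurjective.exists_eq_add_of_finite_quotient {F : Type*} [Field F]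
    {D : Derivation ℤ F F} (hD : IsLinearlySurjective D) {V : Type*} [AddCommGroup V] [Module F V]
    {δ : V →+ V} (hδ : ∀ (f : F) v, δ (f • v) = D f • v + f • δ v)
    (W : Submodule F V) [Module.Finite F (V ⧸ W)] (v : V) : ∃ u, ∃ w ∈ W, v = δ u + w := by
  obtain ⟨M, g, hgM, hgW⟩ := exists_sum_range_smul_mem W fun n => δ^[n] v
  obtain ⟨c, hcM, hc⟩ := exists_coeff_adjoint D M g
  obtain ⟨y, hy⟩ := hD M c (by simpa [hcM] using hgM) 1
  have hparts := sum_mem fun n (_ : n ∈ range (M + 1)) =>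
    smul_iterate_sub_mem_range D hδ n (y * g n) v
  rw [sum_sub_distrib, ← sum_smul, hc, hy, one_smul] at hparts
  obtain ⟨u, hu⟩ := hparts
  refine ⟨-u, _, W.smul_mem y hgW, ?_⟩
  simp only [map_neg, hu, smul_sum, smul_smul]
  abel

end LinearEquations

section Polynomials

open MvPolynomial Finset

variable {R : Type*} [CommRing R] (D : Derivation ℤ R R) {σ τ : Type*} {k : ℕ}

/-- The map of polynomials applying `D` to every coefficient, written as the sum in `coeffDer`. -/
noncomputable def mapCoeffs (σ : Type*) : MvPolynomial σ R →+ MvPolynomial σ R :=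
  AddMonoidHom.mk' (fun Q => ∑ m ∈ Q.support, monomial m (D (coeff m Q))) fun P Q => by
    simp only [← sum_def (b := fun m c => monomial m (D c))]
    exact Finsupp.sum_add_index' (by simp) (by simp)

theorem mapCoeffs_monomial (m : σ →₀ ℕ) (c : R) :
    mapCoeffs D σ (monomial m c) = monomial m (D c) :=
  sum_monomial_eq (b := fun m c => monomial m (D c)) (by simp)

/-- The derivation `∂̂` of the polynomial ring that acts as `D` on the coefficients and annihilates
the variables. -/
noncomputable def coeffDerivation (σ : Type*) :
    Derivation ℤ (MvPolynomial σ R) (MvPolynomial σ R) :=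
  Derivation.mk' (mapCoeffs D σ).toIntLinearMap fun P Q => by
    induction P using MvPolynomial.induction_on' with
    | add P P' hP hP' => simp only [add_mul, map_add, hP, hP', add_smul, smul_add]; abel
    | monomial m c =>
      induction Q using MvPolynomial.induction_on' with
      | add Q Q' hQ hQ' => simp only [mul_add, map_add, hQ, hQ', add_smul, smul_add]; abel
      | monomial n e => simp [mapCoeffs_monomial, monomial_mul, mul_comm]

theorem coeffDerivation_monomial (m : σ →₀ ℕ) (c : R) :
    coeffDerivation D σ (monomial m c) = monomial m (D c) :=
  mapCoeffs_monomial D m c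

@[simp]
theorem coeffDerivation_X (a : σ) : coeffDerivation D σ (X a) = 0 := by
  rw [X, coeffDerivation_monomial, D.map_one_eq_zero, map_zero]

theorem rename_coeffDerivation (f : σ → τ) (Q : MvPolynomial σ R) :
    rename f (coeffDerivation D σ Q) = coeffDerivation D τ (rename f Q) := by
  induction Q using MvPolynomial.induction_on' with
  | add P Q hP hQ => simp only [map_add, hP, hQ]
  | monomial m c => simp only [rename_monomial, coeffDerivation_monomial]

/-- The operator `Q ↦ s Q + ∂̂ Q`, that is `∂̂` conjugated by a formal exponential with logarithmic
derivative `s`. -/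
noncomputable def twistedDer (s : MvPolynomial σ R) : MvPolynomial σ R →+ MvPolynomial σ R :=
  AddMonoidHom.mulLeft s + (coeffDerivation D σ : MvPolynomial σ R →+ MvPolynomial σ R)

theorem twistedDer_apply (s Q : MvPolynomial σ R) :
    twistedDer D s Q = s * Q + coeffDerivation D σ Q := rfl

theorem twistedDer_mul (s t P Q : MvPolynomial σ R) :
    twistedDer D (s + t) (P * Q) = twistedDer D s P * Q + P * twistedDer D t Q := by
  simp only [twistedDer_apply, Derivation.leibniz, smul_eq_mul]
  ring

theorem twistedDer_C_mul (s : MvPolynomial σ R) (c : R) (Q : MvPolynomial σ R) :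
    twistedDer D s (C c * Q) = C (D c) * Q + C c * twistedDer D s Q := by
  rw [← zero_add s, twistedDer_mul, twistedDer_apply, zero_mul, zero_add, zero_add,
    ← monomial_zero', coeffDerivation_monomial]

theorem rename_twistedDer (f : σ → τ) (s Q : MvPolynomial σ R) :
    rename f (twistedDer D s Q) = twistedDer D (rename f s) (rename f Q) := by
  simp only [twistedDer_apply, map_add, map_mul, rename_coeffDerivation]

variable (R) in
/-- The sum of all variables. -/
noncomputable abbrev sumX (σ : Type*) [Fintype σ] : MvPolynomial σ R := ∑ a, X a

theorem rename_sumX [Fintype σ] [Fintype τ] (e : σ ≃ τ) : rename e (sumX R σ) = sumX R τ := by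
  simpa using Equiv.sum_comp e fun a => (X a : MvPolynomial τ R)

theorem sumX_fin_succ : sumX R (Fin (k + 1)) = X 0 + rename Fin.succ (sumX R (Fin k)) := by
  simp [Fin.sum_univ_succ]

theorem finSuccEquiv_X_zero_pow_mul_rename_succ (n : ℕ) (q : MvPolynomial (Fin k) R) :
    MvPolynomial.finSuccEquiv R k (X 0 ^ n * rename Fin.succ q) = Polynomial.monomial n q := by
  have hq : MvPolynomial.finSuccEquiv R k (rename Fin.succ q) = Polynomial.C q := by
    induction q using MvPolynomial.induction_on with
    | C a => simp [finSuccEquiv_apply]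
    | add p q hp hq => simp [hp, hq]
    | mul_X p n hp => simp [hp, finSuccEquiv_X_succ]
  rw [map_mul, map_pow, finSuccEquiv_X_zero, hq, mul_comm, Polynomial.C_mul_X_pow_eq_monomial]

theorem fin_succ_polynomial_induction {motive : MvPolynomial (Fin (k + 1)) R → Prop}
    (add : ∀ x y, motive x → motive y → motive (x + y))
    (pow_mul : ∀ n q, motive (X 0 ^ n * rename Fin.succ q)) (x) : motive x := by
  obtain ⟨f, rfl⟩ := (MvPolynomial.finSuccEquiv R k).symm.surjective x
  induction f using Polynomial.induction_on' with
  | add f g hf hg => simpa only [map_add] using add _ _ hf hg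
  | monomial n q =>
    rw [← finSuccEquiv_X_zero_pow_mul_rename_succ, AlgEquiv.symm_apply_apply]
    exact pow_mul n q

/-- Elimination of the variable `λ₀` by the substitution `λ₀ ↦ -(λ₁ + ⋯ + λₖ) - ∂̂`, the operator
acting on the coefficient of each power of `λ₀`. -/
noncomputable def elimZero (k : ℕ) : MvPolynomial (Fin (k + 1)) R →+ MvPolynomial (Fin k) R :=
  AddMonoidHom.mk'
    (fun Q => (MvPolynomial.finSuccEquiv R k Q).sum fun n q =>
      (-twistedDer D (sumX R (Fin k)))^[n] q) fun P Q => by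
    rw [map_add, Polynomial.sum_add_index _ _ _ (fun n => iterate_map_zero _ n)
      fun n => iterate_map_add _ n]

theorem elimZero_X_zero_pow_mul_rename_succ (n : ℕ) (q : MvPolynomial (Fin k) R) :
    elimZero D k (X 0 ^ n * rename Fin.succ q) = (-twistedDer D (sumX R (Fin k)))^[n] q := by
  change Polynomial.sum _ _ = _
  rw [finSuccEquiv_X_zero_pow_mul_rename_succ, Polynomial.sum_monomial_index]
  exact iterate_map_zero _ n

theorem elimZero_rename_succ (q : MvPolynomial (Fin k) R) :
    elimZero D k (rename Fin.succ q) = q := by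
  simpa using elimZero_X_zero_pow_mul_rename_succ D 0 q

theorem twistedDer_sumX_mul_rename_succ (x : MvPolynomial (Fin (k + 1)) R)
    (q : MvPolynomial (Fin k) R) :
    twistedDer D (sumX R _) (x * rename Fin.succ q) = twistedDer D (X 0) x * rename Fin.succ q +
      x * rename Fin.succ (twistedDer D (sumX R _) q) := by
  rw [sumX_fin_succ, twistedDer_mul, rename_twistedDer]

theorem twistedDer_sumX_X_zero_pow_mul_rename_succ (n : ℕ) (q : MvPolynomial (Fin k) R) :
    twistedDer D (sumX R _) (X 0 ^ n * rename Fin.succ q) =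
      X 0 ^ (n + 1) * rename Fin.succ q +
        X 0 ^ n * rename Fin.succ (twistedDer D (sumX R _) q) := by
  rw [twistedDer_sumX_mul_rename_succ, twistedDer_apply, Derivation.leibniz_pow]
  simp [pow_succ']

theorem elimZero_twistedDer_sumX (x : MvPolynomial (Fin (k + 1)) R) :
    elimZero D k (twistedDer D (sumX R _) x) = 0 := by
  induction x using fin_succ_polynomial_induction with
  | add x y hx hy => rw [map_add, map_add, hx, hy, add_zero]
  | pow_mul n q =>
    rw [twistedDer_sumX_X_zero_pow_mul_rename_succ, map_add, elimZero_X_zero_pow_mul_rename_succ,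
      elimZero_X_zero_pow_mul_rename_succ, Function.iterate_succ_apply, AddMonoidHom.neg_apply,
      iterate_map_neg, neg_add_cancel]

theorem sub_rename_succ_elimZero_mem_range (x : MvPolynomial (Fin (k + 1)) R) :
    x - rename Fin.succ (elimZero D k x) ∈ (twistedDer D (sumX R (Fin (k + 1)))).range := by
  induction x using fin_succ_polynomial_induction with
  | add x y hx hy => simpa only [map_add, add_sub_add_comm] using add_mem hx hy
  | pow_mul n q =>
    rw [elimZero_X_zero_pow_mul_rename_succ]
    induction n generalizing q with
    | zero => simp
    | succ n ih =>
      convert add_mem (AddMonoidHom.mem_range.mpr ⟨X 0 ^ n * rename Fin.succ q, rfl⟩)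
        (ih (-twistedDer D (sumX R _) q)) using 1
      rw [twistedDer_sumX_X_zero_pow_mul_rename_succ, map_neg, Function.iterate_succ_apply]
      simp only [AddMonoidHom.neg_apply]
      ring

theorem elimZero_mul_rename_succ_iterate (n : ℕ) (q : MvPolynomial (Fin k) R)
    (x : MvPolynomial (Fin (k + 1)) R) :
    elimZero D k (x * rename Fin.succ ((twistedDer D (sumX R _))^[n] q)) =
      elimZero D k ((-twistedDer D (X 0))^[n] x * rename Fin.succ q) := by
  induction n generalizing q with
  | zero => rfl
  | succ n ih =>
    have h := elimZero_twistedDer_sumX D ((-twistedDer D (X 0))^[n] x * rename Fin.succ q)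
    rw [twistedDer_sumX_mul_rename_succ, map_add] at h
    rw [Function.iterate_succ_apply, ih, Function.iterate_succ_apply', AddMonoidHom.neg_apply,
      neg_mul, map_neg, eq_neg_iff_add_eq_zero, add_comm, h]

end Polynomials

section SignSum

open Equiv Equiv.Perm Finset

variable {n R V : Type*} [Fintype n] [DecidableEq n] [CommRing R] [AddCommGroup V] [Module R V]
  (ρ : Representation R (Perm n) V)

/-- The antisymmetrizer `∑ σ, sign σ • ρ σ`, not divided by `(card n)!`. -/
def signSum : V →ₗ[R] V := ∑ σ, sign σ • ρ σ

theorem signSum_apply (v : V) : signSum ρ v = ∑ σ, sign σ • ρ σ v := by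
  simp [signSum, LinearMap.sum_apply]

theorem signSum_perm_apply (τ : Perm n) (v : V) : signSum ρ (ρ τ v) = sign τ • signSum ρ v := by
  simp_rw [signSum_apply, smul_sum]
  refine Fintype.sum_equiv (Equiv.mulRight τ) _ _ fun σ => ?_
  rw [coe_mulRight, map_mul, map_mul, Module.End.mul_apply, smul_smul, mul_left_comm,
    Int.units_mul_self, mul_one]

theorem perm_signSum_apply (τ : Perm n) (v : V) : ρ τ (signSum ρ v) = sign τ • signSum ρ v := by
  simp_rw [signSum_apply, map_sum, smul_sum]
  refine Fintype.sum_equiv (Equiv.mulLeft τ) _ _ fun σ => ?_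
  rw [coe_mulLeft, map_mul, map_mul, Module.End.mul_apply, smul_smul, ← mul_assoc,
    Int.units_mul_self, one_mul, Units.smul_def, Units.smul_def, map_zsmul]

theorem signSum_of_skew {v : V} (hv : ∀ σ, ρ σ v = sign σ • v) :
    signSum ρ v = (Fintype.card n).factorial • v := by
  simp [signSum_apply, hv, smul_smul, Fintype.card_perm]

theorem map_signSum_iSup_map (W : Submodule R V) :
    (⨆ σ, W.map (ρ σ)).map (signSum ρ) ≤ W.map (signSum ρ) := by
  simp_rw [Submodule.map_iSup, iSup_le_iff, Submodule.map_le_iff_le_comap]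
  rintro σ w hw
  rw [Submodule.mem_comap, Submodule.mem_comap, signSum_perm_apply, Units.smul_def, ← map_zsmul]
  exact Submodule.mem_map_of_mem (zsmul_mem hw _)

variable {k : ℕ}

/-- The inclusion of `Perm (Fin k)` in `Perm (Fin (k + 1))` as the stabilizer of `0`. -/
def succPerm (k : ℕ) : Perm (Fin k) →* Perm (Fin (k + 1)) where
  toFun e := decomposeFin.symm (0, e)
  map_one' := by simp [Perm.one_def]
  map_mul' e f := by
    ext x
    cases x using Fin.cases <;> simp

@[simp]
theorem succPerm_zero (e : Perm (Fin k)) : succPerm k e 0 = 0 :=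
  decomposeFin_symm_apply_zero 0 e

@[simp]
theorem succPerm_succ (e : Perm (Fin k)) (a : Fin k) : succPerm k e a.succ = (e a).succ := by
  simp [succPerm]

@[simp]
theorem sign_succPerm (e : Perm (Fin k)) : sign (succPerm k e) = sign e := by
  simp [succPerm]

theorem decomposeFin_symm_eq_swap_mul_succPerm (p : Fin (k + 1)) (e : Perm (Fin k)) :
    decomposeFin.symm (p, e) = swap 0 p * succPerm k e := by
  ext x
  cases x using Fin.cases <;> simp

theorem signSum_eq_sum_swap (ρ : Representation R (Perm (Fin (k + 1))) V) (v : V) :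
    signSum ρ v =
      ∑ p, sign (swap 0 p) • ρ (swap 0 p) (signSum (ρ.comp (succPerm k)) v) := by
  simp_rw [signSum_apply, map_sum, smul_sum]
  rw [← Equiv.sum_comp decomposeFin.symm, Fintype.sum_prod_type]
  refine sum_congr rfl fun p _ => sum_congr rfl fun e _ => ?_
  simp [decomposeFin_symm_eq_swap_mul_succPerm, smul_smul, Units.smul_def]

end SignSum

section Arrays

open Equiv Equiv.Perm MvPolynomial

variable (R n : Type*) [CommRing R] (D : Derivation ℤ R R) (k : ℕ) (ι : Type*)

/-- Arrays of polynomials in variables labelled by `n`, indexed by one element of `ι` per variable.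
For `n = Fin (k + 1)` these are `k`-differential operators with a variable `λ₀` added, so that `λ₀`
and `i₀` are on the same footing as `λ₁, …, λₖ` and `i₁, …, iₖ`. -/
abbrev PolyArray := (n → ι) → MvPolynomial n R

/-- `k`-differential operators with indices in `ι`. -/
abbrev DiffOp := (Fin (k + 1) → ι) → MvPolynomial (Fin k) R

/-- The simultaneous action of permutations on indices and variables. -/
noncomputable def permRep : Representation R (Perm n) (PolyArray R n ι) where
  toFun σ := (rename σ).toLinearMap.compLeft (n → ι) ∘ₗ LinearMap.funLeft R _ fun i => i ∘ σ
  map_one' := by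
    ext b i : 2
    simp [LinearMap.funLeft]
  map_mul' σ τ := by
    ext b i : 2
    simp [LinearMap.funLeft, rename_rename, Function.comp_assoc]

/-- The action of `Sₖ` on `k`-differential operators underlying `IsSkewsym`. -/
noncomputable def tailRep : Representation R (Perm (Fin k)) (DiffOp R k ι) where
  toFun e := (rename e).toLinearMap.compLeft _ ∘ₗ
    LinearMap.funLeft R _ fun i => Fin.cons (i 0) fun a => i (e a).succ
  map_one' := by
    ext P i : 2
    simp only [LinearMap.funLeft, Perm.coe_one, rename_id]
    exact congrArg P (Fin.cons_self_tail i)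
  map_mul' e f := by
    ext P i : 2
    simp [LinearMap.funLeft, rename_rename]

/-- The inclusion of `k`-differential operators in arrays as those not involving `λ₀`. -/
noncomputable def liftArray : DiffOp R k ι →ₗ[R] PolyArray R (Fin (k + 1)) ι :=
  (rename Fin.succ).toLinearMap.compLeft _

variable {R n ι k}

/-- Entrywise elimination of `λ₀`, a left inverse of `liftArray`. -/
noncomputable def reduceArray : PolyArray R (Fin (k + 1)) ι →+ DiffOp R k ι :=
  (elimZero D k).compLeft _

/-- The total derivative `Q ↦ (∑ a, λ_a) Q + ∂̂ Q`, applied entrywise. -/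
noncomputable def arrayTotalDer [Fintype n] : PolyArray R n ι →+ PolyArray R n ι :=
  (twistedDer D (sumX R n)).compLeft _

theorem permRep_apply (σ : Perm n) (b : PolyArray R n ι) (i : n → ι) :
    permRep R n ι σ b i = rename σ (b (i ∘ σ)) := rfl

theorem tailRep_apply (e : Perm (Fin k)) (P : DiffOp R k ι) (i : Fin (k + 1) → ι) :
    tailRep R k ι e P i = rename e (P (Fin.cons (i 0) fun a => i (e a).succ)) := rfl

theorem liftArray_apply (P : DiffOp R k ι) (i : Fin (k + 1) → ι) :
    liftArray R k ι P i = rename Fin.succ (P i) := rfl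

theorem reduceArray_apply (b : PolyArray R (Fin (k + 1)) ι) (i : Fin (k + 1) → ι) :
    reduceArray D b i = elimZero D k (b i) := rfl

theorem reduceArray_liftArray (P : DiffOp R k ι) : reduceArray D (liftArray R k ι P) = P :=
  funext fun i => elimZero_rename_succ D (P i)

theorem reduceArray_arrayTotalDer (b : PolyArray R (Fin (k + 1)) ι) :
    reduceArray D (arrayTotalDer D b) = 0 :=
  funext fun i => elimZero_twistedDer_sumX D (b i)

theorem sub_liftArray_reduceArray_mem_range (b : PolyArray R (Fin (k + 1)) ι) :
    b - liftArray R k ι (reduceArray D b) ∈ (arrayTotalDer D).range := by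
  choose y hy using fun i => sub_rename_succ_elimZero_mem_range D (b i)
  exact ⟨y, funext hy⟩

theorem arrayTotalDer_smul [Fintype n] (f : R) (b : PolyArray R n ι) :
    arrayTotalDer D (f • b) = D f • b + f • arrayTotalDer D b := by
  funext i
  rw [Pi.add_apply, Pi.smul_apply, Pi.smul_apply, smul_eq_C_mul, smul_eq_C_mul]
  exact (congrArg _ (smul_eq_C_mul (b i) f)).trans (twistedDer_C_mul D _ f (b i))

theorem permRep_arrayTotalDer [Fintype n] (σ : Perm n) (b : PolyArray R n ι) :
    permRep R n ι σ (arrayTotalDer D b) = arrayTotalDer D (permRep R n ι σ b) := by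
  funext i
  exact (rename_twistedDer D σ _ _).trans (by rw [rename_sumX σ]; rfl)

theorem comp_succPerm (e : Perm (Fin k)) (i : Fin (k + 1) → ι) :
    i ∘ succPerm k e = Fin.cons (i 0) fun a => i (e a).succ := by
  funext x
  cases x using Fin.cases <;> simp

theorem permRep_succPerm_liftArray (e : Perm (Fin k)) (P : DiffOp R k ι) :
    permRep R _ ι (succPerm k e) (liftArray R k ι P) = liftArray R k ι (tailRep R k ι e P) := by
  funext i
  rw [permRep_apply, liftArray_apply, liftArray_apply, tailRep_apply, comp_succPerm, rename_rename,
    rename_rename, show succPerm k e ∘ Fin.succ = Fin.succ ∘ e from funext (succPerm_succ e)]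

theorem reduceArray_permRep_liftArray_reduceArray (σ : Perm (Fin (k + 1)))
    (b : PolyArray R (Fin (k + 1)) ι) :
    reduceArray D (permRep R _ ι σ (liftArray R k ι (reduceArray D b))) =
      reduceArray D (permRep R _ ι σ b) := by
  obtain ⟨y, hy⟩ := sub_liftArray_reduceArray_mem_range D b
  rw [eq_comm, ← sub_eq_zero, ← map_sub, ← map_sub, ← hy, permRep_arrayTotalDer,
    reduceArray_arrayTotalDer]

theorem signSum_arrayTotalDer [Fintype n] [DecidableEq n] (b : PolyArray R n ι) :
    signSum (permRep R n ι) (arrayTotalDer D b) =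
      arrayTotalDer D (signSum (permRep R n ι) b) := by
  simp only [signSum_apply, permRep_arrayTotalDer, Units.smul_def, map_sum, map_zsmul]

theorem reduceArray_signSum_liftArray_reduceArray (b : PolyArray R (Fin (k + 1)) ι) :
    reduceArray D (signSum (permRep R _ ι) (liftArray R k ι (reduceArray D b))) =
      reduceArray D (signSum (permRep R _ ι) b) := by
  simp only [signSum_apply, map_sum, Units.smul_def, map_zsmul,
    reduceArray_permRep_liftArray_reduceArray]

theorem signSum_comp_succPerm_liftArray (P : DiffOp R k ι) :
    signSum ((permRep R _ ι).comp (succPerm k)) (liftArray R k ι P) =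
      liftArray R k ι (signSum (tailRep R k ι) P) := by
  simp only [signSum_apply, map_sum, Units.smul_def, map_zsmul, MonoidHom.comp_apply,
    permRep_succPerm_liftArray]

theorem reduceArray_signSum_liftArray (P : DiffOp R k ι) :
    reduceArray D (signSum (permRep R _ ι) (liftArray R k ι P)) =
      signSum (tailRep R k ι) P - ∑ α : Fin k, reduceArray D
        (permRep R _ ι (swap 0 α.succ) (liftArray R k ι (signSum (tailRep R k ι) P))) := by
  rw [signSum_eq_sum_swap, signSum_comp_succPerm_liftArray, Fin.sum_univ_succ, swap_self,
    ← Perm.one_def, map_one, map_one, one_smul, Module.End.one_apply, map_add,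
    reduceArray_liftArray, sub_eq_add_neg]
  simp [(Fin.succ_ne_zero _).symm, Units.smul_def]

end Arrays

section Composition

open MvPolynomial Finset

variable {R : Type*} [CommRing R] (D : Derivation ℤ R R) {k : ℕ} {ι : Type*}

/-- The operator `Q ↦ -λ₀ Q - ∂̂ Q`, applied entrywise. Under `reduceArray` it is the adjoint of the
total derivative of a factor not involving `λ₀`. -/
noncomputable def adjointDer : PolyArray R (Fin (k + 1)) ι →+ PolyArray R (Fin (k + 1)) ι :=
  (-twistedDer D (X 0)).compLeft _

theorem adjointDer_apply (b : PolyArray R (Fin (k + 1)) ι) (i : Fin (k + 1) → ι) :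
    adjointDer D b i = -twistedDer D (X 0) (b i) := rfl

theorem iterate_adjointDer_apply (n : ℕ) (b : PolyArray R (Fin (k + 1)) ι)
    (i : Fin (k + 1) → ι) : (adjointDer D)^[n] b i = (-twistedDer D (X 0))^[n] (b i) :=
  Function.Semiconj.iterate_right (f := fun b : PolyArray R _ ι => b i) (fun _ => rfl) n b

theorem reduceArray_rename_succ_smul_adjointDer (q : MvPolynomial (Fin k) R)
    (b : PolyArray R (Fin (k + 1)) ι) :
    reduceArray D (rename Fin.succ q • adjointDer D b) =
      reduceArray D (rename Fin.succ (twistedDer D (sumX R _) q) • b) := by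
  funext i
  rw [reduceArray_apply, reduceArray_apply, Pi.smul_apply, Pi.smul_apply, smul_eq_mul, smul_eq_mul,
    mul_comm, mul_comm _ (b i)]
  exact (elimZero_mul_rename_succ_iterate D 1 q (b i)).symm

variable (R) [DecidableEq ι] in
/-- The array with constant entries `c j` in the positions `(j, s)` and zeros elsewhere. -/
noncomputable def column (s : Fin k → ι) : (ι → R) →ₗ[R] PolyArray R (Fin (k + 1)) ι :=
  LinearMap.pi fun i => if Fin.tail i = s then Algebra.linearMap R _ ∘ₗ LinearMap.proj (i 0) else 0

theorem column_apply [DecidableEq ι] (s : Fin k → ι) (c : ι → R) (i : Fin (k + 1) → ι) :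
    column R s c i = if Fin.tail i = s then C (c (i 0)) else 0 := by
  rw [column, LinearMap.pi_apply]
  split_ifs <;> rfl

variable [Fintype ι] (N : ℕ) (K : ι → ι → ℕ → R)

/-- The additive map `P ↦ K ∘ P` on `k`-differential operators. -/
noncomputable def compHom : DiffOp R k ι →+ DiffOp R k ι :=
  AddMonoidHom.mk' (fun P i => ∑ j, ∑ n ∈ range (N + 1),
    C (K (i 0) j n) * (twistedDer D (sumX R (Fin k)))^[n] (P (Function.update i 0 j))) fun P Q => by
    funext i
    simp only [Pi.add_apply, iterate_map_add, mul_add, sum_add_distrib]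

theorem compHom_apply (P : DiffOp R k ι) (i : Fin (k + 1) → ι) :
    compHom D N K P i = ∑ j, ∑ n ∈ range (N + 1),
      C (K (i 0) j n) * (twistedDer D (sumX R (Fin k)))^[n] (P (Function.update i 0 j)) := rfl

theorem rename_iterate_twistedDer_sumX (e : Equiv.Perm (Fin k)) (n : ℕ)
    (Q : MvPolynomial (Fin k) R) :
    rename e ((twistedDer D (sumX R _))^[n] Q) = (twistedDer D (sumX R _))^[n] (rename e Q) :=
  Function.Semiconj.iterate_right (f := rename e)
    (fun Q => by rw [rename_twistedDer, rename_sumX]) n Q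

theorem tailRep_compHom (e : Equiv.Perm (Fin k)) (P : DiffOp R k ι) :
    tailRep R k ι e (compHom D N K P) = compHom D N K (tailRep R k ι e P) := by
  funext i
  simp only [compHom_apply, tailRep_apply, rename_iterate_twistedDer_sumX, map_sum, map_mul,
    rename_C, Fin.cons_zero, Fin.update_cons_zero, Function.update_self, ne_eq, Fin.succ_ne_zero,
    not_false_eq_true, Function.update_of_ne]

theorem signSum_compHom (P : DiffOp R k ι) :
    signSum (tailRep R k ι) (compHom D N K P) = compHom D N K (signSum (tailRep R k ι) P) := by
  simp only [signSum_apply, tailRep_compHom, Units.smul_def, map_sum, map_zsmul]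

/-- The arrays `w` such that `reduceArray` maps every multiple of `w` by a polynomial in
`λ₁, …, λₖ` to an operator of the form `K ∘ P`. -/
noncomputable def imageCore : Submodule R (PolyArray R (Fin (k + 1)) ι) where
  carrier := {w | ∀ q : MvPolynomial (Fin k) R,
    reduceArray D (rename Fin.succ q • w) ∈ (compHom D N K).range}
  zero_mem' q := by simp
  add_mem' ha hb q := by
    rw [smul_add, map_add]
    exact add_mem (ha q) (hb q)
  smul_mem' c w hw q := by
    rw [← algebraMap_smul (MvPolynomial (Fin (k + 1)) R) c w, algebraMap_eq, smul_smul,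
      ← rename_C Fin.succ, ← map_mul]
    exact hw _

variable {D N K}

theorem X_succ_smul_mem_imageCore {w : PolyArray R (Fin (k + 1)) ι} (hw : w ∈ imageCore D N K)
    (a : Fin k) : X (R := R) a.succ • w ∈ imageCore D N K := fun q => by
  rw [smul_smul, ← rename_X, ← map_mul]
  exact hw _

theorem adjointDer_mem_imageCore {w : PolyArray R (Fin (k + 1)) ι} (hw : w ∈ imageCore D N K) :
    adjointDer D w ∈ imageCore D N K := fun q => by
  rw [reduceArray_rename_succ_smul_adjointDer]
  exact hw _

variable [DecidableEq ι]

theorem compHom_single (j : ι) (s : Fin k → ι) (q : MvPolynomial (Fin k) R)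
    (i : Fin (k + 1) → ι) :
    compHom D N K (Pi.single (Fin.cons j s) q) i = if Fin.tail i = s then
      ∑ n ∈ range (N + 1), C (K (i 0) j n) * (twistedDer D (sumX R (Fin k)))^[n] q else 0 := by
  have hupdate (j') : Function.update i 0 j' = Fin.cons j s ↔ j' = j ∧ Fin.tail i = s := by
    rw [← Fin.cons_self_tail i, Fin.update_cons_zero, Fin.cons_inj, Fin.tail_cons]
  rw [compHom_apply, sum_eq_single j]
  · split_ifs with hs
    · simp [(hupdate j).mpr ⟨rfl, hs⟩]
    · simp [hupdate, hs]
  · intro j' _ hj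
    simp [hupdate, hj]
  · simp

theorem sum_adjointDer_column_mem_imageCore (s : Fin k → ι) (j : ι) :
    ∑ n ∈ range (N + 1), (adjointDer D)^[n] (column R s fun i => K i j n) ∈ imageCore D N K := by
  refine fun q => ⟨Pi.single (Fin.cons j s) q, funext fun i => ?_⟩
  have hterm (n : ℕ) (c : R) : elimZero D k ((-twistedDer D (X 0))^[n] (C c) *
      rename Fin.succ q) = C c * (twistedDer D (sumX R (Fin k)))^[n] q := by
    rw [← elimZero_mul_rename_succ_iterate, ← rename_C Fin.succ, ← map_mul, elimZero_rename_succ]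
  rw [compHom_single, reduceArray_apply, Pi.smul_apply, Finset.sum_apply, smul_eq_mul, mul_comm,
    sum_mul, map_sum]
  split_ifs with hs
  · simp [iterate_adjointDer_apply, column_apply, hs, hterm]
  · simp [iterate_adjointDer_apply, column_apply, hs, iterate_map_zero]

end Composition

section Finiteness

open Equiv MvPolynomial Finset

theorem finite_quotient_of_reduction {R V I : Type*} [Ring R] [AddCommGroup V] [Module R V]
    {e : I → V} (he : Submodule.span R (Set.range e) = ⊤) (deg : I → ℕ) {s : Set I}
    (hs : s.Finite) (W : Submodule R V)
    (hW : ∀ i ∉ s, e i ∈ W ⊔ Submodule.span R (e '' {j | deg j < deg i})) :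
    Module.Finite R (V ⧸ W) := by
  have hreduce (d : ℕ) : ∀ i, deg i = d → e i ∈ W ⊔ Submodule.span R (e '' s) := by
    induction d using Nat.strong_induction_on with
    | _ d ih =>
      rintro i rfl
      by_cases hi : i ∈ s
      · exact Submodule.mem_sup_right (Submodule.subset_span ⟨i, hi, rfl⟩)
      · have hle : Submodule.span R (e '' {j | deg j < deg i}) ≤ W ⊔ Submodule.span R (e '' s) := by
          rw [Submodule.span_le]
          rintro _ ⟨j, hj, rfl⟩
          exact ih _ hj j rfl
        have hsup := sup_le (le_sup_left (a := W)) hle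
        exact hsup (hW i hi)
  have htop : W ⊔ Submodule.span R (e '' s) = ⊤ := by
    rw [eq_top_iff, ← he, Submodule.span_le]
    rintro _ ⟨i, rfl⟩
    exact hreduce _ i rfl
  rw [Module.finite_def, ← Submodule.range_mkQ W, LinearMap.range_eq_map, ← htop,
    Submodule.map_sup, Submodule.mkQ_map_self, bot_sup_eq]
  exact (Submodule.fg_span (hs.image e)).map _

theorem coeff_coeffDerivation {R : Type*} [CommRing R] (D : Derivation ℤ R R) {σ : Type*}
    (Q : MvPolynomial σ R) (m : σ →₀ ℕ) : coeff m (coeffDerivation D σ Q) = D (coeff m Q) := by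
  classical
  induction Q using MvPolynomial.induction_on' with
  | add P Q hP hQ => simp only [map_add, coeff_add, hP, hQ]
  | monomial n c =>
    rw [coeffDerivation_monomial, coeff_monomial, coeff_monomial]
    split_ifs <;> simp

variable (R n ι : Type*) [CommRing R] [Fintype (n → ι)]

/-- The basis of arrays with a single nonzero entry, which is a monomial with coefficient `1`. -/
noncomputable def monomialBasis :
    Module.Basis (Σ _ : n → ι, n →₀ ℕ) R (PolyArray R n ι) :=
  Pi.basis fun _ => basisMonomials n R

/-- The arrays all of whose entries are polynomials of total degree less than `d`. -/
noncomputable def degreeLT (d : ℕ) : Submodule R (PolyArray R n ι) :=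
  Submodule.span R (monomialBasis R n ι '' {p | p.2.degree < d})

variable {R n ι}

theorem monomialBasis_apply [DecidableEq (n → ι)] (p : Σ _ : n → ι, n →₀ ℕ) :
    monomialBasis R n ι p = Pi.single p.1 (monomial p.2 1) := by
  simp [monomialBasis]

theorem mem_degreeLT {d : ℕ} {b : PolyArray R n ι} :
    b ∈ degreeLT R n ι d ↔ ∀ i m, d ≤ m.degree → coeff m (b i) = 0 := by
  rw [degreeLT, Module.Basis.mem_span_image]
  have hrepr (p) : (monomialBasis R n ι).repr b p = coeff p.2 (b p.1) := Pi.basis_repr _ _ _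
  simp only [Set.subset_def, mem_coe, Finsupp.mem_support_iff, hrepr, Set.mem_ofPred_eq,
    Sigma.forall, ← not_lt, not_imp_comm]

theorem degreeLT_mono {d e : ℕ} (h : d ≤ e) : degreeLT R n ι d ≤ degreeLT R n ι e :=
  fun _ hb => mem_degreeLT.mpr fun i m hm => mem_degreeLT.mp hb i m (h.trans hm)

theorem X_smul_mem_degreeLT {d : ℕ} {b : PolyArray R n ι} (hb : b ∈ degreeLT R n ι d) (a : n) :
    X (R := R) a • b ∈ degreeLT R n ι (d + 1) := by
  classical
  refine mem_degreeLT.mpr fun i m hm => ?_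
  rw [Pi.smul_apply, smul_eq_mul, coeff_X_mul']
  split_ifs with ha
  · refine mem_degreeLT.mp hb i _ ?_
    have hsplit := tsub_add_cancel_of_le
      (Finsupp.single_le_iff.mpr (Nat.one_le_iff_ne_zero.mpr (Finsupp.mem_support_iff.mp ha)))
    rw [← hsplit, map_add, Finsupp.degree_single] at hm
    omega
  · rfl

theorem permRep_mem_degreeLT {d : ℕ} {b : PolyArray R n ι} (hb : b ∈ degreeLT R n ι d)
    (σ : Perm n) : permRep R n ι σ b ∈ degreeLT R n ι d := by
  refine mem_degreeLT.mpr fun i m hm => coeff_rename_eq_zero _ _ _ ?_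
  rintro m rfl
  exact mem_degreeLT.mp hb _ _ (by rwa [Finsupp.degree_mapDomain] at hm)

theorem permRep_monomialBasis (σ : Perm n) (i : n → ι) (m : n →₀ ℕ) :
    permRep R n ι σ (monomialBasis R n ι ⟨i ∘ σ, m⟩) =
      monomialBasis R n ι ⟨i, m.mapDomain σ⟩ := by
  classical
  funext j
  have hij : j ∘ σ = i ∘ σ ↔ j = i := σ.surjective.injective_comp_right.eq_iff
  rw [permRep_apply, monomialBasis_apply, monomialBasis_apply, Pi.single_apply, Pi.single_apply,
    apply_ite (rename σ), rename_monomial, map_zero]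
  simp only [hij]

theorem X_smul_monomialBasis (a : n) (i : n → ι) (m : n →₀ ℕ) :
    X (R := R) a • monomialBasis R n ι ⟨i, m⟩ =
      monomialBasis R n ι ⟨i, m + Finsupp.single a 1⟩ := by
  classical
  rw [monomialBasis_apply, monomialBasis_apply, ← Pi.single_smul, smul_eq_mul, X, monomial_mul,
    one_mul, add_comm]

variable (D : Derivation ℤ R R)

theorem coeffDerivation_mem_degreeLT {d : ℕ} {b : PolyArray R n ι} (hb : b ∈ degreeLT R n ι d) :
    (fun i => coeffDerivation D n (b i)) ∈ degreeLT R n ι d :=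
  mem_degreeLT.mpr fun i m hm => by
    rw [coeff_coeffDerivation, mem_degreeLT.mp hb i m hm, map_zero]

theorem finite_setOf_forall_snd_lt {κ : Type*} [Finite κ] [Finite n] (N : ℕ) :
    {p : Σ _ : κ, n →₀ ℕ | ∀ a, p.2 a < N}.Finite := by
  have hprod := (Set.finite_univ (α := κ)).prod (Set.Finite.pi' fun _ : n => Set.finite_Iio N)
  have hinj : Function.Injective fun p : Σ _ : κ, n →₀ ℕ => (p.1, ⇑p.2) := by
    rintro ⟨i, m⟩ ⟨j, m'⟩ h
    simpa using h
  exact (hprod.preimage hinj.injOn).subset fun p hp => ⟨Set.mem_univ _, hp⟩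

end Finiteness

section Reduction

open MvPolynomial Finset
open scoped Matrix

variable {R ι : Type*} [CommRing R] (D : Derivation ℤ R R) {k : ℕ} [Fintype ι]

theorem adjointDer_add_X_smul_mem_degreeLT {d : ℕ} {b : PolyArray R (Fin (k + 1)) ι}
    (hb : b ∈ degreeLT R _ ι d) :
    adjointDer D b + (X 0 : MvPolynomial (Fin (k + 1)) R) • b ∈ degreeLT R _ ι d := by
  convert neg_mem (coeffDerivation_mem_degreeLT D hb) using 1
  funext i
  simp [adjointDer_apply, twistedDer_apply]

theorem adjointDer_mem_degreeLT {d : ℕ} {b : PolyArray R (Fin (k + 1)) ι}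
    (hb : b ∈ degreeLT R _ ι d) : adjointDer D b ∈ degreeLT R _ ι (d + 1) := by
  simpa using sub_mem (degreeLT_mono d.le_succ (adjointDer_add_X_smul_mem_degreeLT D hb))
    (X_smul_mem_degreeLT hb 0)

theorem iterate_adjointDer_mem_degreeLT {d : ℕ} {b : PolyArray R (Fin (k + 1)) ι}
    (hb : b ∈ degreeLT R _ ι d) (n : ℕ) : (adjointDer D)^[n] b ∈ degreeLT R _ ι (d + n) := by
  induction n with
  | zero => exact hb
  | succ n ih =>
    rw [Function.iterate_succ_apply']
    exact adjointDer_mem_degreeLT D ih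

theorem iterate_adjointDer_sub_mem_degreeLT {d : ℕ} {b : PolyArray R (Fin (k + 1)) ι}
    (hb : b ∈ degreeLT R _ ι (d + 1)) (n : ℕ) :
    (adjointDer D)^[n] b - (-X 0 : MvPolynomial (Fin (k + 1)) R) ^ n • b ∈
      degreeLT R _ ι (d + n) := by
  induction n with
  | zero => simp
  | succ n ih =>
    have hlower := adjointDer_add_X_smul_mem_degreeLT D (iterate_adjointDer_mem_degreeLT D hb n)
    rw [add_right_comm d 1 n] at hlower
    rw [Function.iterate_succ_apply', pow_succ', ← add_assoc]
    convert sub_mem hlower (X_smul_mem_degreeLT ih 0) using 1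
    rw [smul_sub, mul_smul, neg_smul]
    abel

variable {N : ℕ} {K : ι → ι → ℕ → R}

variable {D} in
theorem adjointDer_mem_imageCore_sup {d : ℕ} {x : PolyArray R (Fin (k + 1)) ι}
    (hx : x ∈ imageCore D N K ⊔ degreeLT R _ ι d) :
    adjointDer D x ∈ imageCore D N K ⊔ degreeLT R _ ι (d + 1) := by
  obtain ⟨w, hw, b, hb, rfl⟩ := Submodule.mem_sup.mp hx
  rw [map_add]
  exact Submodule.add_mem_sup (adjointDer_mem_imageCore hw) (adjointDer_mem_degreeLT D hb)

variable {D} in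
theorem X_succ_smul_mem_imageCore_sup {d : ℕ} {x : PolyArray R (Fin (k + 1)) ι}
    (hx : x ∈ imageCore D N K ⊔ degreeLT R _ ι d) (a : Fin k) :
    X (R := R) a.succ • x ∈ imageCore D N K ⊔ degreeLT R _ ι (d + 1) := by
  obtain ⟨w, hw, b, hb, rfl⟩ := Submodule.mem_sup.mp hx
  rw [smul_add]
  exact Submodule.add_mem_sup (X_succ_smul_mem_imageCore hw a) (X_smul_mem_degreeLT hb _)

theorem column_mem_degreeLT_one [DecidableEq ι] (s : Fin k → ι) (c : ι → R) :
    column R s c ∈ degreeLT R _ ι 1 := by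
  refine mem_degreeLT.mpr fun i m hm => ?_
  have hm0 : 0 ≠ m := by
    rintro rfl
    simp at hm
  rw [column_apply, apply_ite (coeff m), coeff_C, if_neg hm0, coeff_zero, ite_self]

theorem pow_smul_column_coeff_mem [DecidableEq ι] (s : Fin k → ι) (j : ι) :
    (-X 0 : MvPolynomial (Fin (k + 1)) R) ^ N • column R s (fun i => K i j N) ∈
      imageCore D N K ⊔ degreeLT R _ ι N := by
  have hgen := sum_adjointDer_column_mem_imageCore (D := D) (N := N) (K := K) s j
  have hlead := iterate_adjointDer_sub_mem_degreeLT D (d := 0)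
    (column_mem_degreeLT_one s fun i => K i j N) N
  have hlower : ∑ n ∈ range N, (adjointDer D)^[n] (column R s fun i => K i j n) ∈
      degreeLT R _ ι N := sum_mem fun n hn =>
    degreeLT_mono (by have := mem_range.mp hn; omega)
      (iterate_adjointDer_mem_degreeLT D (column_mem_degreeLT_one s _) n)
  rw [zero_add] at hlead
  rw [sum_range_succ] at hgen
  convert Submodule.add_mem_sup hgen (neg_mem (add_mem hlower hlead)) using 1
  abel

theorem pow_smul_column_mem [DecidableEq ι] (hK : IsUnit (Matrix.of fun i j => K i j N))
    (s : Fin k → ι) (c : ι → R) : (-X 0 : MvPolynomial (Fin (k + 1)) R) ^ N • column R s c ∈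
      imageCore D N K ⊔ degreeLT R _ ι N := by
  obtain ⟨v, rfl⟩ := Matrix.mulVec_surjective_iff_isUnit.mpr hK c
  have hcols : Matrix.of (fun i j => K i j N) *ᵥ v = ∑ j, v j • fun i => K i j N := by
    funext i
    simp [Matrix.mulVec, dotProduct, mul_comm]
  rw [hcols, map_sum, smul_sum]
  refine sum_mem fun j _ => ?_
  rw [map_smul, smul_comm]
  exact Submodule.smul_mem _ _ (pow_smul_column_coeff_mem D s j)

theorem pow_X_zero_smul_column_single [DecidableEq ι] (i : Fin (k + 1) → ι) (N : ℕ) :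
    (X 0 : MvPolynomial (Fin (k + 1)) R) ^ N • column R (Fin.tail i) (Pi.single (i 0) 1) =
      monomialBasis R _ ι ⟨i, Finsupp.single 0 N⟩ := by
  funext j
  have hij : j = i ↔ Fin.tail j = Fin.tail i ∧ j 0 = i 0 := by
    rw [← Fin.cons_self_tail i, ← Fin.cons_self_tail j, Fin.cons_inj]
    simp [and_comm]
  rw [monomialBasis_apply, Pi.single_apply, Pi.smul_apply, column_apply, Pi.single_apply]
  simp only [hij]
  split_ifs <;> simp_all [X_pow_eq_monomial]

theorem monomialBasis_single_mem [DecidableEq ι] (hK : IsUnit (Matrix.of fun i j => K i j N))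
    (i : Fin (k + 1) → ι) : monomialBasis R _ ι ⟨i, Finsupp.single 0 N⟩ ∈
      imageCore D N K ⊔ degreeLT R _ ι N := by
  have h := pow_smul_column_mem D hK (Fin.tail i) (Pi.single (i 0) 1)
  rcases N.even_or_odd with hN | hN
  · rwa [hN.neg_pow, pow_X_zero_smul_column_single] at h
  · rwa [hN.neg_pow, neg_smul, neg_mem_iff, pow_X_zero_smul_column_single] at h

theorem adjointDer_monomialBasis (p) : adjointDer D (monomialBasis R (Fin (k + 1)) ι p) =
    -((X 0 : MvPolynomial (Fin (k + 1)) R) • monomialBasis R _ ι p) := by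
  classical
  funext j
  rw [monomialBasis_apply, adjointDer_apply, twistedDer_apply, Pi.single_apply,
    apply_ite (coeffDerivation D _), coeffDerivation_monomial]
  simp [Pi.single_apply]

theorem monomialBasis_add_single_mem {i : Fin (k + 1) → ι} {m : Fin (k + 1) →₀ ℕ}
    (h : monomialBasis R _ ι ⟨i, m⟩ ∈ imageCore D N K ⊔ degreeLT R _ ι m.degree)
    (a : Fin (k + 1)) : monomialBasis R _ ι ⟨i, m + Finsupp.single a 1⟩ ∈
      imageCore D N K ⊔ degreeLT R _ ι (m + Finsupp.single a 1).degree := by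
  rw [map_add, Finsupp.degree_single, ← X_smul_monomialBasis]
  cases a using Fin.cases with
  | zero =>
    rw [← neg_mem_iff, ← adjointDer_monomialBasis D]
    exact adjointDer_mem_imageCore_sup h
  | succ a => exact X_succ_smul_mem_imageCore_sup h a

theorem monomialBasis_mem_of_le [DecidableEq ι] (hK : IsUnit (Matrix.of fun i j => K i j N))
    (i : Fin (k + 1) → ι) {m : Fin (k + 1) →₀ ℕ} (hm : N ≤ m 0) :
    monomialBasis R _ ι ⟨i, m⟩ ∈ imageCore D N K ⊔ degreeLT R _ ι m.degree := by
  obtain ⟨m, rfl⟩ := exists_add_of_le (Finsupp.single_le_iff.mpr hm)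
  obtain ⟨s, rfl⟩ := Multiset.toFinsupp.surjective m
  clear hm
  induction s using Multiset.induction_on with
  | empty => simpa using monomialBasis_single_mem D hK i
  | cons a s ih =>
    have hcons : Multiset.toFinsupp (a ::ₘ s) = Multiset.toFinsupp s + Finsupp.single a 1 := by
      rw [← Multiset.singleton_add, add_comm {a} s, map_add,
        Multiset.toFinsupp_singleton]
    rw [hcons, ← add_assoc]
    exact monomialBasis_add_single_mem D ih a

theorem finite_quotient_iSup_imageCore [DecidableEq ι]
    (hK : IsUnit (Matrix.of fun i j => K i j N)) :
    Module.Finite R (PolyArray R (Fin (k + 1)) ι ⧸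
      ⨆ σ, (imageCore D N K).map (permRep R (Fin (k + 1)) ι σ)) := by
  refine finite_quotient_of_reduction (monomialBasis R _ ι).span_eq (fun p => p.2.degree)
    (finite_setOf_forall_snd_lt N) _ ?_
  rintro ⟨i, m⟩ hp
  obtain ⟨a, ha⟩ : ∃ a, N ≤ m a := by simpa using hp
  let σ : Equiv.Perm (Fin (k + 1)) := Equiv.swap 0 a
  have hσ : N ≤ m.mapDomain σ 0 := by
    rwa [← Equiv.swap_apply_right 0 a, Finsupp.mapDomain_apply (Equiv.injective _)]
  have hperm : monomialBasis R _ ι ⟨i, m⟩ =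
      permRep R _ ι σ (monomialBasis R _ ι ⟨i ∘ σ, m.mapDomain σ⟩) := by
    rw [permRep_monomialBasis, ← Finsupp.mapDomain_comp, ← Equiv.Perm.coe_mul,
      Equiv.swap_mul_self, Equiv.Perm.coe_one, Finsupp.mapDomain_id]
  obtain ⟨w, hw, b, hb, hwb⟩ :=
    Submodule.mem_sup.mp (monomialBasis_mem_of_le D hK (i ∘ σ) hσ)
  rw [hperm, ← hwb, map_add]
  rw [Finsupp.degree_mapDomain] at hb
  exact Submodule.add_mem_sup (Submodule.mem_iSup_of_mem σ (Submodule.mem_map_of_mem hw))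
    (permRep_mem_degreeLT hb σ)

end Reduction

section TotalSkewsymmetrization

open Equiv MvPolynomial Finset

theorem rename_swap_zero_succ_monomial {R : Type*} [CommRing R] {k : ℕ} (α : Fin k)
    (m : Fin k →₀ ℕ) (c : R) :
    rename (swap 0 α.succ) (rename Fin.succ (monomial m c)) =
      X 0 ^ m α * rename Fin.succ (monomial (m.erase α) c) := by
  have hswap : (m.erase α).mapDomain (swap 0 α.succ ∘ Fin.succ) =
      (m.erase α).mapDomain Fin.succ := Finsupp.mapDomain_congr fun a ha => by
    have hne : a ≠ α := by
      rintro rfl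
      simp at ha
    exact swap_apply_of_ne_of_ne a.succ_ne_zero ((Fin.succ_injective k).ne hne)
  rw [rename_rename, rename_monomial, rename_monomial, X_pow_eq_monomial, monomial_mul, one_mul,
    ← hswap]
  nth_rw 1 [← Finsupp.single_add_erase α m]
  rw [Finsupp.mapDomain_add, Finsupp.mapDomain_single, Function.comp_apply, swap_apply_right]

variable {F : Type*} [Field F] (D : Derivation ℤ F F) {k l : ℕ}

theorem lamZero_eq_neg_twistedDer :
    lamZero D = ⇑(-twistedDer D (sumX F (Fin k))) :=
  funext fun _ => (neg_add' _ _).symm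

theorem tauAct_eq_reduceArray (α : Fin k) (P : DiffOp F k (Fin l)) :
    tauAct D α P = reduceArray D (permRep F _ _ (swap 0 α.succ) (liftArray F k _ P)) := by
  funext i
  rw [reduceArray_apply, permRep_apply, liftArray_apply]
  conv_rhs => rw [as_sum (P _), map_sum, map_sum, map_sum]
  refine sum_congr rfl fun m _ => ?_
  rw [rename_swap_zero_succ_monomial, elimZero_X_zero_pow_mul_rename_succ,
    lamZero_eq_neg_twistedDer]
  rfl

theorem totSkew_eq_smul (P : DiffOp F k (Fin l)) : totSkew D P = ((k : F) + 1)⁻¹ • (P -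
    ∑ α : Fin k, reduceArray D (permRep F _ _ (swap 0 α.succ) (liftArray F k _ P))) := by
  funext i
  simp only [totSkew, tauAct_eq_reduceArray, Pi.smul_apply, Pi.sub_apply, Finset.sum_apply]

theorem totSkew_nsmul (n : ℕ) (P : DiffOp F k (Fin l)) :
    totSkew D (n • P) = n • totSkew D P := by
  simp only [totSkew_eq_smul, map_nsmul, ← smul_sum, ← smul_sub, smul_comm n]

theorem totSkew_of_tauAct_eq_neg (hk : (k : F) + 1 ≠ 0) {S : DiffOp F k (Fin l)}
    (hS : ∀ (α : Fin k) i, tauAct D α S i = -S i) : totSkew D S = S := by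
  funext i
  simp only [totSkew, hS, sum_const, card_univ, Fintype.card_fin, sub_eq_add_neg, smul_neg,
    neg_neg]
  rw [← Nat.cast_smul_eq_nsmul F, inv_smul_eq_iff₀ hk, add_smul, one_smul, add_comm]

theorem reduceArray_signSum_liftArray_eq_totSkew (hk : (k : F) + 1 ≠ 0)
    (P : DiffOp F k (Fin l)) :
    reduceArray D (signSum (permRep F _ _) (liftArray F k _ P)) =
      ((k : F) + 1) • totSkew D (signSum (tailRep F k _) P) := by
  rw [reduceArray_signSum_liftArray, totSkew_eq_smul, smul_inv_smul₀ hk]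

theorem isSkewsym_iff_tailRep {P : DiffOp F k (Fin l)} :
    IsSkewsym P ↔ ∀ σ, tailRep F k (Fin l) σ P = Perm.sign σ • P :=
  forall_congr' fun _ => funext_iff.symm

theorem IsLinearlySurjective.exists_reduceArray_signSum_compHom_eq {D : Derivation ℤ F F}
    (hD : IsLinearlySurjective D) {ι : Type*} [Fintype ι] [DecidableEq ι] {N : ℕ}
    {K : ι → ι → ℕ → F} (hK : IsUnit (Matrix.of fun i j => K i j N))
    (b : PolyArray F (Fin (k + 1)) ι) :
    ∃ P, reduceArray D (signSum (permRep F _ ι) (liftArray F k ι (compHom D N K P))) =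
      reduceArray D (signSum (permRep F _ ι) b) := by
  have := finite_quotient_iSup_imageCore (k := k) D hK
  obtain ⟨u, w, hw, rfl⟩ := hD.exists_eq_add_of_finite_quotient (arrayTotalDer_smul D)
    (⨆ σ, (imageCore D N K).map (permRep F (Fin (k + 1)) ι σ)) b
  obtain ⟨w', hw', hww'⟩ := map_signSum_iSup_map _ _ (Submodule.mem_map_of_mem hw)
  obtain ⟨P, hP⟩ := hw' 1
  refine ⟨P, ?_⟩
  rw [hP, map_one, one_smul, reduceArray_signSum_liftArray_reduceArray, hww', map_add, map_add,
    signSum_arrayTotalDer, reduceArray_arrayTotalDer, zero_add]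

theorem totSkew_kCirc_nsmul {N : ℕ} {K : Fin l → Fin l → ℕ → F} (n : ℕ)
    (P : DiffOp F k (Fin l)) :
    totSkew D (kCirc D N K (n • P)) = n • totSkew D (kCirc D N K P) :=
  (congrArg _ (map_nsmul (compHom D N K) n P)).trans (totSkew_nsmul D n _)

theorem IsLinearlySurjective.exists_isSkewsym_totSkew_kCirc_eq_factorial_smul
    {D : Derivation ℤ F F} (hD : IsLinearlySurjective D) (hk : (k : F) + 1 ≠ 0) {N : ℕ}
    {K : Fin l → Fin l → ℕ → F} (hK : IsUnit (Matrix.of fun i j => K i j N))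
    {S : DiffOp F k (Fin l)} (hSskew : IsSkewsym S)
    (hStot : ∀ (α : Fin k) i, tauAct D α S i = -S i) :
    ∃ P, IsSkewsym P ∧ totSkew D (kCirc D N K P) = k.factorial • S := by
  obtain ⟨P, hP⟩ := hD.exists_reduceArray_signSum_compHom_eq hK (liftArray F k _ S)
  refine ⟨signSum (tailRep F k _) P, isSkewsym_iff_tailRep.mpr (perm_signSum_apply _ · P), ?_⟩
  rw [reduceArray_signSum_liftArray_eq_totSkew D hk, reduceArray_signSum_liftArray_eq_totSkew D hk,
    signSum_of_skew _ (isSkewsym_iff_tailRep.mp hSskew), signSum_compHom, totSkew_nsmul,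
    totSkew_of_tauAct_eq_neg D hk hStot, Fintype.card_fin] at hP
  exact smul_right_injective _ hk hP

end TotalSkewsymmetrization

theorem stmt_10_general {F : Type*} [Field F] {d : F → F} (hd : IsDerivation d)
    (hsurj : IsLinearlySurjective d) {k l N : ℕ} (hk : ((k + 1).factorial : F) ≠ 0)
    {K : Fin l → Fin l → ℕ → F} (hK : IsUnit (Matrix.of fun i j => K i j N))
    {S : (Fin (k + 1) → Fin l) → MvPolynomial (Fin k) F} (hSskew : IsSkewsym S)
    (hStot : ∀ (α : Fin k) (i : Fin (k + 1) → Fin l), tauAct d α S i = -S i) :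
    ∃ P : (Fin (k + 1) → Fin l) → MvPolynomial (Fin k) F,
      IsSkewsym P ∧ totSkew d (kCirc d N K P) = S := by
  obtain ⟨D, rfl⟩ := hd.exists_derivation_coe_eq
  obtain ⟨hk1, hk0⟩ : (k : F) + 1 ≠ 0 ∧ (k.factorial : F) ≠ 0 := by
    rwa [Nat.factorial_succ, Nat.cast_mul, Nat.cast_succ, mul_ne_zero_iff] at hk
  obtain ⟨Q, hQskew, hQ⟩ :=
    hsurj.exists_isSkewsym_totSkew_kCirc_eq_factorial_smul hk1 hK hSskew hStot
  obtain ⟨P, rfl⟩ : ∃ P, k.factorial • P = Q :=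
    ⟨(k.factorial : F)⁻¹ • Q, by rw [← Nat.cast_smul_eq_nsmul F, smul_inv_smul₀ hk0]⟩
  have hcancel {A B : DiffOp F k (Fin l)} (h : k.factorial • A = k.factorial • B) : A = B :=
    smul_right_injective _ hk0 (by simpa only [Nat.cast_smul_eq_nsmul] using h)
  refine ⟨P, ?_, hcancel ((totSkew_kCirc_nsmul D _ P).symm.trans hQ)⟩
  refine isSkewsym_iff_tailRep.mpr fun σ => hcancel ?_
  rw [← map_nsmul, isSkewsym_iff_tailRep.mp hQskew σ, smul_comm]

/-- Let `F` be a linearly closed differential field of characteristic zero and `K` an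
`ℓ×ℓ` matrix differential operator of order `N` with invertible leading coefficient.
Then for every totally skewsymmetric `k`-differential operator `S` on `F^ℓ` there exists
a skewsymmetric `k`-differential operator `P` on `F^ℓ` with `⟨K∘P⟩⁻ = S`. -/
theorem stmt_10 (F : Type*) [Field F] [CharZero F] (d : F → F) (hd : IsDerivation d)
    (hlc : LinearlyClosed d)
    (k l N : ℕ) (hl : 0 < l)
    (K : Fin l → Fin l → ℕ → F)
    (hK : IsUnit (Matrix.of fun i j : Fin l => K i j N))
    (S : (Fin (k + 1) → Fin l) → MvPolynomial (Fin k) F)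
    (hSskew : IsSkewsym S)
    (hStot : ∀ (α : Fin k) (i : Fin (k + 1) → Fin l), tauAct d α S i = - S i) :
    ∃ P : (Fin (k + 1) → Fin l) → MvPolynomial (Fin k) F,
      IsSkewsym P ∧ totSkew d (kCirc d N K P) = S :=
  stmt_10_general hd hlc.isLinearlySurjective (Nat.cast_ne_zero.mpr (k + 1).factorial_ne_zero) hK
    hSskew hStot
end

section
/- Let k ∈ ℤ≥0 and let F be a linearly closed differential field of characteristic zero with constants C. Let K be an ℓ×ℓ matrix differential operator over F of order N with invertible leading coefficient. Then the set of skewsymmetric k-differential operators P on F^ℓ whose entries are polynomials of degree at most N−1 in each of the variables λ_1,…,λ_k and which satisfy ⟨K∘P⟩⁻ = 0 is a vector space over C of dimension binom(Nℓ, k+1). -/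
/-!
The operators of degree less than `N` in each variable are found inside a finite-dimensional
differential module. The kernel of the reduction `F[λ_0, …, λ_k] → F[λ_1, …, λ_k]` that substitutes
`-(λ_1 + ⋯ + λ_k) - ∂̂` for `λ_0` is the image of the injective operator
`∇ = λ_0 + ⋯ + λ_k + ∂̂`, so `⟨K ∘ P⟩⁻ = 0` says that the alternating family attached to `P`, formed
with the adjoint of `K`, equals `∇ f` for a unique `f`. This `f` is alternating of degree less than
`N` in each variable, and the coefficients of `λ_0 ^ N` express `P` linearly through `f`, because
the leading coefficient of `K` is invertible. After this substitution the equation says that `f` is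
horizontal for a connection on the space of all such families, whose dimension over `F` is that of
the alternating `(k + 1)`-forms on `F ^ (N l)`. Over a linearly closed field the horizontal vectors
of a connection contain a basis of the whole space: otherwise, Lagrange's identity for a Krylov
relation modulo their span `U` gives a vector outside `U` that the connection maps into `U`, and
correcting it by an element of `U` gives a horizontal vector outside `U`.
-/

theorem IsDerivation.exists_derivation {F : Type*} [Field F] {d : F → F} (hd : IsDerivation d) :
    ∃ δ : Derivation ℤ F F, ⇑δ = d :=
  ⟨Derivation.mk' (AddMonoidHom.mk' d hd.map_add).toIntLinearMap fun a b => by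
    simpa [mul_comm, add_comm] using hd.leibniz a b, rfl⟩

theorem LinearlyClosed.surjective {F : Type*} [Field F] {d : F → F} (hd : LinearlyClosed d) :
    Function.Surjective d := fun b => by
  simpa [Finset.sum_range_succ] using (hd 1 (fun n => n) (by simp)).1 b

namespace DiffOp

section Connection

variable {A V : Type*} [CommRing A] [AddCommGroup V] [Module A V] {δ : Derivation ℤ A A}
  {D : Module.End ℤ V}

/-- A connection on a module over a differential ring `(A, δ)`: an additive endomorphism
satisfying the Leibniz rule with respect to scalars. -/
def IsConnection (δ : Derivation ℤ A A) (D : Module.End ℤ V) : Prop :=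
  ∀ (a : A) (v : V), D (a • v) = δ a • v + a • D v

namespace IsConnection

theorem sub_linearMap (hD : IsConnection δ D) (f : Module.End A V) :
    IsConnection δ (D - f.restrictScalars ℤ) := fun a v => by
  simp [hD a v, smul_sub, add_sub_assoc]

theorem restrict (hD : IsConnection δ D) {U : Submodule A V} (hU : ∀ u ∈ U, D u ∈ U) :
    IsConnection (V := U) δ (D.restrict (p := U.restrictScalars ℤ) (q := U.restrictScalars ℤ) hU) :=
  fun a u => Subtype.ext (hD a u)

theorem compLeft (hD : IsConnection δ D) (I : Type*) : IsConnection δ (D.compLeft I) :=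
  fun a f => funext fun i => hD a (f i)

theorem smul_neg_apply (hD : IsConnection δ D) (a : A) (v : V) :
    a • (-D) v = (-D) (a • v) + δ a • v := by
  simp [hD a v]

theorem smul_neg_pow_apply (hD : IsConnection δ D) (n : ℕ) (a : A) (v : V) :
    a • ((-D) ^ n) v =
      ∑ i ∈ Finset.range (n + 1), n.choose i • ((-D) ^ i) (δ^[n - i] a • v) := by
  induction n generalizing a with
  | zero => simp
  | succ n ih =>
    have iterate_succ_sub : ∀ i ∈ Finset.range (n + 1), δ^[n + 1 - i] a = δ^[n - i] (δ a) := by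
      intro i hi
      rw [Nat.succ_sub (Finset.mem_range_succ_iff.1 hi), Function.iterate_succ_apply]
    rw [Finset.sum_choose_succ_nsmul (fun i j => ((-D) ^ i) (δ^[j] a • v)), pow_succ',
      Module.End.mul_apply, hD.smul_neg_apply, ih, ih (δ a), map_sum, add_comm]
    congr 1
    · exact Finset.sum_congr rfl fun i hi => by rw [iterate_succ_sub i hi]
    · simp only [map_nsmul, pow_succ', Module.End.mul_apply]

end IsConnection

/-- The coefficients, up to the signs `(-1) ^ m`, of the formal adjoint
`∑ n, (-∂) ^ n ∘ a n` of the scalar differential operator `∑ n ≤ N, a n ∂ ^ n`. -/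
def adjointCoeff (δ : Derivation ℤ A A) (N : ℕ) (a : ℕ → A) (m : ℕ) : A :=
  ∑ n ∈ Finset.range (N + 1), n.choose m • δ^[n - m] (a n)

theorem adjointCoeff_self (N : ℕ) (a : ℕ → A) : adjointCoeff δ N a N = a N := by
  rw [adjointCoeff, Finset.sum_range_succ, Finset.sum_eq_zero]
  · simp
  · intro n hn
    rw [Nat.choose_eq_zero_of_lt (Finset.mem_range.1 hn), zero_smul]

theorem IsConnection.sum_smul_neg_pow_apply (hD : IsConnection δ D) (N : ℕ) (a : ℕ → A) (v : V) :
    ∑ n ∈ Finset.range (N + 1), a n • ((-D) ^ n) v =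
      ∑ m ∈ Finset.range (N + 1), ((-D) ^ m) (adjointCoeff δ N a m • v) := by
  simp_rw [adjointCoeff, Finset.sum_smul, map_sum]
  rw [Finset.sum_comm]
  refine Finset.sum_congr rfl fun n hn => ?_
  rw [hD.smul_neg_pow_apply]
  refine Finset.sum_subset_zero_on_sdiff (Finset.range_mono (by simpa using hn))
    (fun m hm => ?_) fun m _ => ?_
  · rw [Nat.choose_eq_zero_of_lt (by simpa using (Finset.mem_sdiff.1 hm).2)]
    simp
  · rw [smul_assoc, map_nsmul]

/-- The bilinear concomitant of Lagrange's identity for the operator `(-D) ^ m`. -/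
def concomitant (δ : Derivation ℤ A A) (D : Module.End ℤ V) (m : ℕ) (y : A) (v : V) : V :=
  ∑ i ∈ Finset.range m, δ^[i] y • ((-D) ^ (m - 1 - i)) v

theorem concomitant_succ (m : ℕ) (y : A) (v : V) :
    concomitant δ D (m + 1) y v = y • ((-D) ^ m) v + concomitant δ D m (δ y) v := by
  rw [concomitant, Finset.sum_range_succ', add_comm]
  simp [concomitant, Nat.sub_add_eq, Nat.sub_right_comm]

theorem IsConnection.smul_neg_pow_eq (hD : IsConnection δ D) (m : ℕ) (y : A) (v : V) :
    y • ((-D) ^ m) v = δ^[m] y • v - D (concomitant δ D m y v) := by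
  induction m generalizing y with
  | zero => simp [concomitant]
  | succ m ih =>
    rw [pow_succ', Module.End.mul_apply, hD.smul_neg_apply, ih (δ y), concomitant_succ, map_add,
      Function.iterate_succ_apply, LinearMap.neg_apply]
    abel

end Connection

section Horizontal

variable {F V : Type*} [Field F] [AddCommGroup V] [Module F V] {δ : Derivation ℤ F F}
  {D : Module.End ℤ V} {U : Submodule F V} {v : V}

/-- The Krylov subspace of `v` relative to `U`: the sum of `U` and the span of `(-D) ^ i v`,
`i < n`. -/
def krylov (D : Module.End ℤ V) (U : Submodule F V) (v : V) : ℕ → Submodule F V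
  | 0 => U
  | n + 1 => krylov D U v n ⊔ F ∙ ((-D) ^ n) v

theorem mem_krylov_succ {n : ℕ} {x : V} :
    x ∈ krylov D U v (n + 1) ↔ ∃ y ∈ krylov D U v n, ∃ a : F, y + a • ((-D) ^ n) v = x := by
  simp [krylov, Submodule.mem_sup, Submodule.mem_span_singleton]

theorem krylov_mono : Monotone (krylov D U v) :=
  monotone_nat_of_le_succ fun _ => le_sup_left

theorem neg_pow_apply_mem_krylov (n : ℕ) : ((-D) ^ n) v ∈ krylov D U v (n + 1) :=
  mem_krylov_succ.2 ⟨0, zero_mem _, 1, by simp⟩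

theorem exists_sum_mem_of_mem_krylov {n : ℕ} {x : V} (hx : x ∈ krylov D U v n) :
    ∃ a : ℕ → F, ∑ i ∈ Finset.range n, a i • ((-D) ^ i) v + x ∈ U := by
  induction n generalizing x with
  | zero => exact ⟨0, by simpa [krylov] using hx⟩
  | succ n ih =>
    obtain ⟨y, hy, c, rfl⟩ := mem_krylov_succ.1 hx
    obtain ⟨a, ha⟩ := ih hy
    refine ⟨Function.update a n (-c), ?_⟩
    have below : ∀ i ∈ Finset.range n, Function.update a n (-c) i = a i := fun i hi =>
      Function.update_of_ne (Finset.mem_range.1 hi).ne _ _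
    rw [Finset.sum_range_succ, Finset.sum_congr rfl fun i hi => by rw [below i hi]]
    simpa [add_assoc] using ha

theorem exists_neg_pow_apply_mem_krylov [FiniteDimensional F V] (D : Module.End ℤ V)
    (U : Submodule F V) (v : V) : ∃ n, ((-D) ^ n) v ∈ krylov D U v n := by
  obtain ⟨n, hn⟩ := WellFoundedGT.monotone_chain_condition
    (⟨krylov D U v, krylov_mono⟩ : ℕ →o Submodule F V)
  exact ⟨n, (hn (n + 1) n.le_succ).symm.le (neg_pow_apply_mem_krylov n)⟩

namespace IsConnection

theorem apply_sum_concomitant_mem (hD : IsConnection δ D) {N : ℕ} {a : ℕ → F} {y : F}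
    (ha : ∑ n ∈ Finset.range (N + 1), a n • ((-D) ^ n) v ∈ U)
    (hy : ∑ n ∈ Finset.range (N + 1), adjointCoeff δ N a n * δ^[n] y = 0) :
    D (∑ m ∈ Finset.range (N + 1), concomitant δ D m y (adjointCoeff δ N a m • v)) ∈ U := by
  rw [hD.sum_smul_neg_pow_apply] at ha
  have lagrange := Finset.sum_congr rfl fun m (_ : m ∈ Finset.range (N + 1)) =>
    hD.smul_neg_pow_eq m y (adjointCoeff δ N a m • v)
  simp_rw [← Finset.smul_sum, Finset.sum_sub_distrib, ← map_sum, smul_smul, ← Finset.sum_smul,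
    mul_comm (δ^[_] y), hy, zero_smul, zero_sub] at lagrange
  exact neg_mem_iff.1 (lagrange ▸ U.smul_mem y ha)

theorem neg_apply_mem_krylov (hD : IsConnection δ D) (hU : ∀ u ∈ U, D u ∈ U) {n : ℕ}
    {x : V} (hx : x ∈ krylov D U v n) : (-D) x ∈ krylov D U v (n + 1) := by
  induction n generalizing x with
  | zero => exact krylov_mono zero_le_one (U.neg_mem (hU x hx))
  | succ n ih =>
    obtain ⟨y, hy, a, rfl⟩ := mem_krylov_succ.1 hx
    rw [map_add, ← sub_eq_of_eq_add (hD.smul_neg_apply a _), ← Module.End.mul_apply, ← pow_succ']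
    have neg_pow_mem := neg_pow_apply_mem_krylov (D := D) (U := U) (v := v)
    exact add_mem (krylov_mono n.succ.le_succ (ih hy))
      (sub_mem (Submodule.smul_mem _ _ (neg_pow_mem _))
        (krylov_mono n.succ.le_succ (Submodule.smul_mem _ _ (neg_pow_mem n))))

theorem neg_pow_smul_sub_mem_krylov (hD : IsConnection δ D) (hU : ∀ u ∈ U, D u ∈ U)
    (n : ℕ) (a : F) :
    ((-D) ^ n) (a • v) - a • ((-D) ^ n) v ∈ krylov D U v n := by
  induction n with
  | zero => simp
  | succ n ih =>
    have leading := hD.smul_neg_apply a (((-D) ^ n) v)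
    have := add_mem (hD.neg_apply_mem_krylov hU ih)
      (Submodule.smul_mem _ (-δ a) (neg_pow_apply_mem_krylov n))
    rw [pow_succ', Module.End.mul_apply, Module.End.mul_apply, leading]
    convert this using 1
    simp only [map_sub, neg_smul]
    abel

theorem neg_pow_smul_mem_krylov (hD : IsConnection δ D) (hU : ∀ u ∈ U, D u ∈ U)
    (n : ℕ) (a : F) : ((-D) ^ n) (a • v) ∈ krylov D U v (n + 1) := by
  rw [← sub_add_cancel (((-D) ^ n) (a • v)) (a • ((-D) ^ n) v)]
  exact add_mem (krylov_mono n.le_succ (hD.neg_pow_smul_sub_mem_krylov hU n a))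
    (Submodule.smul_mem _ _ (neg_pow_apply_mem_krylov n))

theorem concomitant_mem_krylov (hD : IsConnection δ D) (hU : ∀ u ∈ U, D u ∈ U)
    (n : ℕ) (y a : F) : concomitant δ D n y (a • v) ∈ krylov D U v n :=
  sum_mem fun i hi => Submodule.smul_mem _ _ <|
    krylov_mono (by have := Finset.mem_range.1 hi; omega) (hD.neg_pow_smul_mem_krylov hU _ a)

theorem sum_concomitant_notMem (hD : IsConnection δ D) (hU : ∀ u ∈ U, D u ∈ U) {n : ℕ}
    (hn : ((-D) ^ n) v ∉ krylov D U v n) {y : F} (hy : y ≠ 0) {b : ℕ → F} (hb : b (n + 1) ≠ 0) :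
    ∑ m ∈ Finset.range (n + 2), concomitant δ D m y (b m • v) ∉ U := by
  intro hw
  have lower : ∑ m ∈ Finset.range (n + 1), concomitant δ D m y (b m • v)
      + concomitant δ D n (δ y) (b (n + 1) • v) ∈ krylov D U v n :=
    add_mem (sum_mem fun m hm => krylov_mono (Finset.mem_range_succ_iff.1 hm)
      (hD.concomitant_mem_krylov hU m y _)) (hD.concomitant_mem_krylov hU n _ _)
  have leading : y • ((-D) ^ n) (b (n + 1) • v) ∈ krylov D U v n := by
    have := sub_mem (krylov_mono n.zero_le hw) lower
    rw [Finset.sum_range_succ, concomitant_succ] at this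
    convert this using 1
    abel
  rw [Submodule.smul_mem_iff _ hy] at leading
  have := sub_mem leading (hD.neg_pow_smul_sub_mem_krylov hU n (b (n + 1)))
  rw [sub_sub_cancel, Submodule.smul_mem_iff _ hb] at this
  exact hn this

/-- The vector is the concomitant of a minimal Krylov relation with a solution of the adjoint scalar
equation: Lagrange's identity puts its image under `D` into `U`, minimality keeps it out of `U`. -/
theorem exists_notMem_apply_mem [FiniteDimensional F V] (hD : IsConnection δ D)
    (hU : ∀ u ∈ U, D u ∈ U) (hδ : LinearlyClosed δ) (hUtop : U ≠ ⊤) :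
    ∃ w ∉ U, D w ∈ U := by
  classical
  obtain ⟨v, -, hv⟩ := SetLike.exists_of_lt hUtop.lt_top
  have hex := exists_neg_pow_apply_mem_krylov D U v
  obtain ⟨n, hn⟩ : ∃ n, Nat.find hex = n + 1 :=
    Nat.exists_eq_succ_of_ne_zero fun h => hv (by simpa [h, krylov] using Nat.find_spec hex)
  obtain ⟨c, hc⟩ := exists_sum_mem_of_mem_krylov (hn ▸ Nat.find_spec hex)
  set a := Function.update c (n + 1) 1 with ha
  have relation : ∑ i ∈ Finset.range (n + 2), a i • ((-D) ^ i) v ∈ U := by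
    rw [Finset.sum_range_succ, Finset.sum_congr rfl fun i hi => by
      rw [ha, Function.update_of_ne (Finset.mem_range.1 hi).ne]]
    simpa [ha] using hc
  have leading : adjointCoeff δ (n + 1) a (n + 1) ≠ 0 := by simp [adjointCoeff_self, ha]
  obtain ⟨y, hy, hsol⟩ := (hδ (n + 1) _ leading).2 n.succ_pos
  exact ⟨_, hD.sum_concomitant_notMem hU (Nat.find_min hex (hn ▸ n.lt_succ_self)) hy leading,
    hD.apply_sum_concomitant_mem relation hsol⟩

theorem span_horizontal_eq_top [FiniteDimensional F V] (hD : IsConnection δ D)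
    (hδ : LinearlyClosed δ) :
    Submodule.span F {v | D v = 0} = ⊤ := by
  set U := Submodule.span F {v | D v = 0}
  have apply_mem_and_exists : ∀ u ∈ U, D u ∈ U ∧ ∃ w ∈ U, D w = u := by
    intro u hu
    induction hu using Submodule.closure_induction with
    | zero => exact ⟨by simp, 0, zero_mem U, map_zero D⟩
    | add u₁ u₂ _ _ h₁ h₂ =>
      obtain ⟨⟨hD₁, w₁, hw₁, hw₁u⟩, hD₂, w₂, hw₂, hw₂u⟩ := And.intro h₁ h₂
      exact ⟨map_add D u₁ u₂ ▸ add_mem hD₁ hD₂, w₁ + w₂, add_mem hw₁ hw₂,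
        by rw [map_add, hw₁u, hw₂u]⟩
    | smul_mem a v hv =>
      have hvU : v ∈ U := Submodule.subset_span hv
      obtain ⟨b, hb⟩ := hδ.surjective a
      have D_smul : ∀ c : F, D (c • v) = δ c • v := fun c => by rw [hD, hv, smul_zero, add_zero]
      exact ⟨D_smul _ ▸ U.smul_mem _ hvU, b • v, U.smul_mem b hvU, hb ▸ D_smul b⟩
  by_contra hne
  obtain ⟨w, hw, hDw⟩ :=
    hD.exists_notMem_apply_mem (fun u hu => (apply_mem_and_exists u hu).1) hδ hne
  obtain ⟨u, hu, huw⟩ := (apply_mem_and_exists _ hDw).2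
  have horizontal : w - u ∈ U := Submodule.subset_span (by simp [huw])
  exact hw ((Submodule.sub_mem_iff_left U hu).1 horizontal)

theorem apply_eq_zero_iff_repr (hD : IsConnection δ D) {ι : Type*} [Finite ι]
    (b : Module.Basis ι F V) (hb : ∀ i, D (b i) = 0) (v : V) :
    D v = 0 ↔ ∀ i, δ (b.repr v i) = 0 := by
  have := Fintype.ofFinite ι
  have : D v = ∑ i, δ (b.repr v i) • b i := by
    conv_lhs => rw [← b.sum_repr v, map_sum]
    exact Finset.sum_congr rfl fun i _ => by rw [hD, hb, smul_zero, add_zero]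
  rw [this]
  exact ⟨Fintype.linearIndependent_iff.1 b.linearIndependent _, fun h => by simp [h]⟩

/-- The horizontal vectors of a connection, as a vector space over a field of constants. -/
def horizontal (hD : IsConnection δ D) {C : Subfield F} (hC : ∀ x ∈ C, δ x = 0) :
    Submodule C V where
  carrier := {v | D v = 0}
  zero_mem' := map_zero D
  add_mem' hv hw := show D _ = 0 by
    rw [map_add, show D _ = 0 from hv, show D _ = 0 from hw, add_zero]
  smul_mem' c v hv := show D ((c : F) • v) = 0 by
    rw [hD, hC c c.2, show D v = 0 from hv, zero_smul, smul_zero, add_zero]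

theorem rank_horizontal [FiniteDimensional F V] (hD : IsConnection δ D)
    (hδ : LinearlyClosed δ) {C : Subfield F} (hC : ∀ x, x ∈ C ↔ δ x = 0) :
    Module.rank C (hD.horizontal fun x => (hC x).1) = Module.finrank F V := by
  obtain ⟨s, hs, hspan, hli⟩ := exists_linearIndependent F {v | D v = 0}
  let b : Module.Basis s F V := Module.Basis.mk hli
    (by simp [hspan, hD.span_horizontal_eq_top hδ])
  have hb : ∀ i, b i = i := fun i => by simp [b]
  have : Fintype s := FiniteDimensional.fintypeBasisIndex b
  have hspanC : hD.horizontal (fun x => (hC x).1) = Submodule.span C (Set.range b) := by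
    ext v
    rw [show v ∈ hD.horizontal _ ↔ D v = 0 from Iff.rfl,
      hD.apply_eq_zero_iff_repr b (fun i => hb i ▸ hs i.2), b.mem_span_iff_repr_mem C]
    exact forall_congr' fun i =>
      ⟨fun h => ⟨⟨_, (hC _).2 h⟩, rfl⟩, fun ⟨c, hc⟩ => hc ▸ (hC c).1 c.2⟩
  rw [hspanC, rank_span (b.linearIndependent.restrict_scalars' C),
    Cardinal.mk_range_eq _ b.injective, Module.finrank_eq_card_basis b, Cardinal.mk_fintype]

end IsConnection
end Horizontal

section Polynomials

open MvPolynomial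

theorem coeff_rename_equiv {R s t : Type*} [CommSemiring R] (e : s ≃ t) (Q : MvPolynomial s R)
    (m : t →₀ ℕ) : coeff m (rename e Q) = coeff (m.equivMapDomain e.symm) Q := by
  rw [← coeff_rename_mapDomain e e.injective, ← Finsupp.equivMapDomain_eq_mapDomain,
    ← Finsupp.equivMapDomain_trans]
  simp

/-- The permutation of `Fin (k + 1)` that fixes `0` and permutes the successors by `e`. -/
def fixZero {k : ℕ} (e : Equiv.Perm (Fin k)) : Equiv.Perm (Fin (k + 1)) :=
  Equiv.Perm.decomposeFin.symm (0, e)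

section FixZero

variable {k : ℕ} (e : Equiv.Perm (Fin k))

@[simp] theorem fixZero_zero : fixZero e 0 = 0 := by simp [fixZero]

@[simp] theorem fixZero_succ (a : Fin k) : fixZero e a.succ = (e a).succ := by simp [fixZero]

@[simp] theorem sign_fixZero : Equiv.Perm.sign (fixZero e) = Equiv.Perm.sign e := by
  simp [fixZero]

theorem exists_fixZero_eq {σ : Equiv.Perm (Fin (k + 1))} (hσ : σ 0 = 0) : ∃ e, fixZero e = σ := by
  refine ⟨(Equiv.Perm.decomposeFin σ).2, ?_⟩
  have : (Equiv.Perm.decomposeFin σ).1 = 0 := by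
    rw [← hσ, ← Equiv.Perm.decomposeFin_symm_apply_zero (Equiv.Perm.decomposeFin σ).1
      (Equiv.Perm.decomposeFin σ).2, Prod.mk.eta, Equiv.symm_apply_apply]
  rw [fixZero, ← this, Prod.mk.eta, Equiv.symm_apply_apply]

end FixZero

section ZerothVariable

variable {R : Type*} [CommSemiring R] {k : ℕ}

/-- The coefficient of the `n`-th power of the variable `λ_0`, a polynomial in the remaining
variables. -/
noncomputable def zerothCoeff (n : ℕ) : MvPolynomial (Fin (k + 1)) R →ₗ[R] MvPolynomial (Fin k) R :=
  (Polynomial.lcoeff (MvPolynomial (Fin k) R) n).restrictScalars R ∘ₗ (finSuccEquiv R k).toLinearMap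

/-- The polynomial `λ_0 ^ n q(λ_1, …, λ_k)`. -/
noncomputable def zerothMonomial (n : ℕ) :
    MvPolynomial (Fin k) R →ₗ[R] MvPolynomial (Fin (k + 1)) R :=
  (finSuccEquiv R k).symm.toLinearMap ∘ₗ
    (Polynomial.monomial n : MvPolynomial (Fin k) R →ₗ[_] _).restrictScalars R

theorem coeff_zerothCoeff (n : ℕ) (m : Fin k →₀ ℕ) (Q : MvPolynomial (Fin (k + 1)) R) :
    coeff m (zerothCoeff n Q) = coeff (m.cons n) Q :=
  finSuccEquiv_coeff_coeff _ _ _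

theorem coeff_eq_coeff_zerothCoeff (m : Fin (k + 1) →₀ ℕ) (Q : MvPolynomial (Fin (k + 1)) R) :
    coeff m Q = coeff m.tail (zerothCoeff (m 0) Q) := by
  rw [coeff_zerothCoeff, Finsupp.cons_tail]

theorem ext_zerothCoeff {P Q : MvPolynomial (Fin (k + 1)) R}
    (h : ∀ n, zerothCoeff n P = zerothCoeff n Q) : P = Q :=
  (finSuccEquiv R k).injective (Polynomial.ext h)

theorem zerothCoeff_zerothMonomial (m n : ℕ) (q : MvPolynomial (Fin k) R) :
    zerothCoeff m (zerothMonomial n q) = if n = m then q else 0 := by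
  simp [zerothCoeff, zerothMonomial, Polynomial.coeff_monomial]

theorem zerothMonomial_monomial (n : ℕ) (m : Fin k →₀ ℕ) (c : R) :
    zerothMonomial n (monomial m c) = monomial (m.cons n) c := by
  classical
  ext a
  have cons_eq_iff : m.cons n = a ↔ n = a 0 ∧ m = a.tail := by
    rw [← Finsupp.cons_injective2.eq_iff, Finsupp.cons_tail]
  rw [coeff_eq_coeff_zerothCoeff, zerothCoeff_zerothMonomial, apply_ite (coeff a.tail)]
  simp only [coeff_monomial, coeff_zero, cons_eq_iff, ite_and]

theorem X_zero_mul_zerothMonomial (n : ℕ) (q : MvPolynomial (Fin k) R) :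
    X 0 * zerothMonomial n q = zerothMonomial (n + 1) q :=
  (finSuccEquiv R k).injective (by simp [zerothMonomial, finSuccEquiv_X_zero])

theorem X_succ_mul_zerothMonomial (a : Fin k) (n : ℕ) (q : MvPolynomial (Fin k) R) :
    X a.succ * zerothMonomial n q = zerothMonomial n (X a * q) :=
  (finSuccEquiv R k).injective (by
    simp [zerothMonomial, finSuccEquiv_X_succ, Polynomial.C_mul_monomial])

theorem zerothMonomial_induction {p : MvPolynomial (Fin (k + 1)) R → Prop}
    (add : ∀ P Q, p P → p Q → p (P + Q)) (zerothMonomial : ∀ n q, p (zerothMonomial n q))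
    (Q : MvPolynomial (Fin (k + 1)) R) : p Q := by
  rw [← (finSuccEquiv R k).symm_apply_apply Q]
  induction finSuccEquiv R k Q using Polynomial.induction_on' with
  | add P Q hP hQ => exact map_add (finSuccEquiv R k).symm P Q ▸ add _ _ hP hQ
  | monomial n q => exact zerothMonomial n q

theorem eventually_zerothCoeff_eq_zero (Q : MvPolynomial (Fin (k + 1)) R) :
    ∀ᶠ n in Filter.atTop, zerothCoeff n Q = 0 :=
  (Filter.eventually_gt_atTop (finSuccEquiv R k Q).natDegree).mono fun _ =>
    Polynomial.coeff_eq_zero_of_natDegree_lt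

theorem zerothCoeff_rename_fixZero (e : Equiv.Perm (Fin k)) (n : ℕ)
    (Q : MvPolynomial (Fin (k + 1)) R) :
    zerothCoeff n (rename (fixZero e) Q) = rename e (zerothCoeff n Q) := by
  ext m
  rw [coeff_zerothCoeff, coeff_rename_equiv, coeff_rename_equiv, coeff_zerothCoeff]
  congr 1
  ext a
  rw [Finsupp.equivMapDomain_apply, Equiv.symm_symm]
  cases a using Fin.cases <;> simp

theorem rename_fixZero_zerothMonomial (e : Equiv.Perm (Fin k)) (n : ℕ)
    (q : MvPolynomial (Fin k) R) :
    rename (fixZero e) (zerothMonomial n q) = zerothMonomial n (rename e q) :=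
  ext_zerothCoeff fun m => by
    rw [zerothCoeff_rename_fixZero, zerothCoeff_zerothMonomial, zerothCoeff_zerothMonomial]
    split_ifs <;> simp

end ZerothVariable

section TotalDerivative

variable {F : Type*} [Field F] {δ : Derivation ℤ F F} {k : ℕ}

theorem coeff_coeffDer (m : Fin k →₀ ℕ) (Q : MvPolynomial (Fin k) F) :
    coeff m (coeffDer δ Q) = δ (coeff m Q) := by
  classical
  rw [coeffDer, coeff_sum]
  simp only [coeff_monomial, Finset.sum_ite_eq']
  split_ifs with h
  · rfl
  · rw [notMem_support_iff.1 h, map_zero]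

/-- The operator `E`, bundled as an additive endomorphism; on the symbols of differential operators
it is the total derivative. -/
noncomputable def totalDer (δ : Derivation ℤ F F) (k : ℕ) : Module.End ℤ (MvPolynomial (Fin k) F) :=
  (AddMonoidHom.mk' (eOp δ) fun P Q => by
    have : coeffDer δ (P + Q) = coeffDer δ P + coeffDer δ Q := by ext m; simp [coeff_coeffDer]
    simp only [eOp, this]
    ring).toIntLinearMap

theorem totalDer_apply (Q : MvPolynomial (Fin k) F) :
    totalDer δ k Q = (∑ a, X a) * Q + coeffDer δ Q :=
  rfl

theorem isConnection_totalDer : IsConnection δ (totalDer δ k) := fun a Q => by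
  have : coeffDer δ (a • Q) = δ a • Q + a • coeffDer δ Q := by
    ext m
    simp [coeff_coeffDer, add_comm, mul_comm]
  rw [totalDer_apply, totalDer_apply, this, mul_smul_comm, smul_add]
  abel

theorem iterate_eOp (n : ℕ) (Q : MvPolynomial (Fin k) F) :
    (eOp δ)^[n] Q = (totalDer δ k ^ n) Q :=
  (Module.End.pow_apply (totalDer δ k) n Q).symm

theorem iterate_lamZero (n : ℕ) (Q : MvPolynomial (Fin k) F) :
    (lamZero δ)^[n] Q = ((-totalDer δ k) ^ n) Q := by
  have : lamZero δ = -totalDer δ k := funext fun Q => (neg_add' _ _).symm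
  rw [Module.End.pow_apply, this]

theorem totalDer_rename (e : Equiv.Perm (Fin k)) (Q : MvPolynomial (Fin k) F) :
    totalDer δ k (rename e Q) = rename e (totalDer δ k Q) := by
  have : coeffDer δ (rename e Q) = rename e (coeffDer δ Q) := by
    ext m
    simp only [coeff_coeffDer, coeff_rename_equiv]
  rw [totalDer_apply, totalDer_apply, this, map_add, map_mul, map_sum]
  simp only [rename_X, Equiv.sum_comp e (fun a => (X a : MvPolynomial (Fin k) F))]

theorem totalDer_zerothMonomial (n : ℕ) (q : MvPolynomial (Fin k) F) :
    totalDer δ (k + 1) (zerothMonomial n q) =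
      zerothMonomial (n + 1) q + zerothMonomial n (totalDer δ k q) := by
  have coeffDer_zerothMonomial :
      coeffDer δ (zerothMonomial n q) = zerothMonomial n (coeffDer δ q) := by
    ext m
    rw [coeff_coeffDer, coeff_eq_coeff_zerothCoeff, coeff_eq_coeff_zerothCoeff m,
      zerothCoeff_zerothMonomial, zerothCoeff_zerothMonomial]
    split_ifs <;> simp [coeff_coeffDer]
  simp only [totalDer_apply, coeffDer_zerothMonomial, Fin.sum_univ_succ, add_mul, Finset.sum_mul,
    X_zero_mul_zerothMonomial, X_succ_mul_zerothMonomial, map_add, map_sum, add_assoc]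

theorem zerothCoeff_succ_totalDer (n : ℕ) (Q : MvPolynomial (Fin (k + 1)) F) :
    zerothCoeff (n + 1) (totalDer δ (k + 1) Q) =
      zerothCoeff n Q + totalDer δ k (zerothCoeff (n + 1) Q) := by
  induction Q using zerothMonomial_induction with
  | add P Q hP hQ => simp only [map_add, hP, hQ]; abel
  | zerothMonomial n q =>
    rw [totalDer_zerothMonomial, map_add]
    simp only [zerothCoeff_zerothMonomial]
    split_ifs <;> simp_all

theorem zerothCoeff_eq_zero_of_totalDer {N : ℕ} {Q : MvPolynomial (Fin (k + 1)) F}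
    (hQ : ∀ n > N, zerothCoeff n (totalDer δ (k + 1) Q) = 0) : ∀ n ≥ N, zerothCoeff n Q = 0 := by
  obtain ⟨M, hM⟩ := Filter.eventually_atTop.1 (eventually_zerothCoeff_eq_zero Q)
  intro n hn
  rcases le_total M n with hMn | hnM
  · exact hM n hMn
  · induction hnM using Nat.decreasingInduction with
    | self => exact hM M le_rfl
    | of_succ n _ ih =>
      have := hQ (n + 1) (Nat.lt_succ_of_le hn)
      rwa [zerothCoeff_succ_totalDer, ih (hn.trans n.le_succ), map_zero, add_zero] at this

theorem totalDer_injective : Function.Injective (totalDer δ (k + 1)) :=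
  (injective_iff_map_eq_zero _).2 fun Q hQ => ext_zerothCoeff fun n => by
    rw [map_zero]
    exact zerothCoeff_eq_zero_of_totalDer (N := 0) (fun m _ => by rw [hQ, map_zero]) n n.zero_le

/-- The projection of `F[λ_0, …, λ_k]` onto `F[λ_1, …, λ_k]` along the range of `totalDer`:
it substitutes `-(λ_1 + ⋯ + λ_k) - ∂̂` for `λ_0`. -/
noncomputable def reduce (δ : Derivation ℤ F F) (k : ℕ) :
    MvPolynomial (Fin (k + 1)) F →ₗ[ℤ] MvPolynomial (Fin k) F :=
  (Polynomial.lsum fun n => (-totalDer δ k) ^ n) ∘ₗ (finSuccEquiv F k).toLinearMap.restrictScalars ℤ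

theorem reduce_zerothMonomial (n : ℕ) (q : MvPolynomial (Fin k) F) :
    reduce δ k (zerothMonomial n q) = ((-totalDer δ k) ^ n) q := by
  simp [reduce, zerothMonomial, Polynomial.lsum_apply, Polynomial.sum_monomial_index]

theorem reduce_totalDer (Q : MvPolynomial (Fin (k + 1)) F) :
    reduce δ k (totalDer δ (k + 1) Q) = 0 := by
  induction Q using zerothMonomial_induction with
  | add P Q hP hQ => rw [map_add, map_add, hP, hQ, add_zero]
  | zerothMonomial n q =>
    rw [totalDer_zerothMonomial, map_add, reduce_zerothMonomial, reduce_zerothMonomial, pow_succ,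
      Module.End.mul_apply, LinearMap.neg_apply, map_neg, neg_add_cancel]

theorem sub_zerothMonomial_reduce_mem_range (Q : MvPolynomial (Fin (k + 1)) F) :
    Q - zerothMonomial 0 (reduce δ k Q) ∈ (totalDer δ (k + 1)).range := by
  induction Q using zerothMonomial_induction with
  | add P Q hP hQ => simpa [add_sub_add_comm] using add_mem hP hQ
  | zerothMonomial n q =>
    rw [reduce_zerothMonomial]
    induction n generalizing q with
    | zero => simp
    | succ n ih =>
      have := add_mem (LinearMap.mem_range_self (totalDer δ (k + 1)) (zerothMonomial n q))
        (ih (-totalDer δ k q))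
      rw [totalDer_zerothMonomial] at this
      simpa [pow_succ, ← sub_eq_add_neg, add_sub_assoc] using this

theorem reduce_eq_zero_iff {Q : MvPolynomial (Fin (k + 1)) F} :
    reduce δ k Q = 0 ↔ ∃ P, totalDer δ (k + 1) P = Q := by
  refine ⟨fun h => ?_, ?_⟩
  · simpa [h] using sub_zerothMonomial_reduce_mem_range (δ := δ) Q
  · rintro ⟨P, rfl⟩
    exact reduce_totalDer P

end TotalDerivative
end Polynomials

section Families

open MvPolynomial

section PermutationAction

variable {R ι : Type*} [CommRing R] {n k : ℕ}

/-- The action of permutations on families of polynomials, by simultaneously permuting the indices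
and the variables. -/
noncomputable def act :
    Equiv.Perm (Fin n) →* Module.End R ((Fin n → ι) → MvPolynomial (Fin n) R) where
  toFun σ := LinearMap.pi fun i => (rename σ).toLinearMap ∘ₗ LinearMap.proj (i ∘ σ)
  map_one' := by ext; simp
  map_mul' σ τ := LinearMap.ext fun f => funext fun i => by
    simp [rename_rename, Function.comp_assoc]

theorem act_apply (σ : Equiv.Perm (Fin n)) (f : (Fin n → ι) → MvPolynomial (Fin n) R)
    (i : Fin n → ι) : act σ f i = rename σ (f (i ∘ σ)) :=
  rfl

/-- A family of polynomials is alternating if permutations act on it through the sign character. -/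
def IsAlternating (f : (Fin n → ι) → MvPolynomial (Fin n) R) : Prop :=
  ∀ σ, act σ f = (Equiv.Perm.sign σ : ℤ) • f

theorem IsAlternating.sub {f g : (Fin n → ι) → MvPolynomial (Fin n) R} (hf : IsAlternating f)
    (hg : IsAlternating g) : IsAlternating (f - g) := fun σ => by
  rw [map_sub, hf, hg, smul_sub]

/-- The sum, with signs, over the representatives `swap 0 p` of the cosets of the stabilizer of `0`.
It makes families that are alternating in the indices `1, …, k` alternating in all the indices. -/
noncomputable def cosetSkew :
    Module.End R ((Fin (k + 1) → ι) → MvPolynomial (Fin (k + 1)) R) :=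
  ∑ p, (Equiv.Perm.sign (Equiv.swap 0 p) : ℤ) • act (Equiv.swap 0 p)

theorem isAlternating_cosetSkew {f : (Fin (k + 1) → ι) → MvPolynomial (Fin (k + 1)) R}
    (hf : ∀ e, act (fixZero e) f = (Equiv.Perm.sign e : ℤ) • f) : IsAlternating (cosetSkew f) := by
  intro τ
  rw [cosetSkew, LinearMap.sum_apply, map_sum, Finset.smul_sum]
  refine Fintype.sum_equiv τ _ _ fun p => ?_
  obtain ⟨e, he⟩ := exists_fixZero_eq (σ := Equiv.swap 0 (τ p) * τ * Equiv.swap 0 p) (by simp)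
  have hτ : τ * Equiv.swap 0 p = Equiv.swap 0 (τ p) * fixZero e := by
    rw [he, ← mul_assoc, ← mul_assoc, Equiv.swap_mul_self, one_mul]
  have sign_eq : Equiv.Perm.sign (Equiv.swap 0 p) * Equiv.Perm.sign e =
      Equiv.Perm.sign τ * Equiv.Perm.sign (Equiv.swap 0 (τ p)) := by
    rw [← sign_fixZero e, he]
    rw [map_mul, map_mul, mul_comm, mul_assoc, Int.units_mul_self, mul_one, mul_comm]
  rw [LinearMap.smul_apply, LinearMap.smul_apply, map_zsmul, ← Module.End.mul_apply, ← map_mul, hτ,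
    map_mul, Module.End.mul_apply, hf, map_zsmul, smul_smul, smul_smul, ← Units.val_mul,
    ← Units.val_mul, sign_eq]

theorem cosetSkew_apply (f : (Fin (k + 1) → ι) → MvPolynomial (Fin (k + 1)) R)
    (i : Fin (k + 1) → ι) :
    cosetSkew f i = f i - ∑ a : Fin k, act (Equiv.swap 0 a.succ) f i := by
  have sign_swap : ∀ a : Fin k, Equiv.Perm.sign (Equiv.swap 0 a.succ) = -1 := fun a =>
    Equiv.Perm.sign_swap (Fin.succ_ne_zero a).symm
  rw [cosetSkew, Fin.sum_univ_succ, Equiv.swap_self, ← Equiv.Perm.one_def]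
  simp only [map_one, sign_swap]
  simp [sub_eq_add_neg]

end PermutationAction

section ZerothIndex

variable {R V ι : Type*} [CommRing R] [AddCommGroup V] [Module R V] [Fintype ι] {k : ℕ}

/-- The action of matrices on the zeroth index of a family. -/
noncomputable def zerothMul (A : Matrix ι ι R) : Module.End R ((Fin (k + 1) → ι) → V) :=
  LinearMap.pi fun i => ∑ j, A (i 0) j • LinearMap.proj (Function.update i 0 j)

theorem zerothMul_apply (A : Matrix ι ι R) (f : (Fin (k + 1) → ι) → V) (i : Fin (k + 1) → ι) :
    zerothMul A f i = ∑ j, A (i 0) j • f (Function.update i 0 j) := by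
  simp [zerothMul]

theorem zerothMul_one [DecidableEq ι] (f : (Fin (k + 1) → ι) → V) :
    zerothMul (1 : Matrix ι ι R) f = f := by
  ext i
  simp [zerothMul_apply, Matrix.one_apply]

theorem zerothMul_zerothMul (A B : Matrix ι ι R) (f : (Fin (k + 1) → ι) → V) :
    zerothMul A (zerothMul B f) = zerothMul (A * B) f := by
  ext i
  simp only [zerothMul_apply, Function.update_self, Function.update_idem, Finset.smul_sum,
    smul_smul, Matrix.mul_apply, Finset.sum_smul]
  exact Finset.sum_comm

theorem zerothMul_comp_fixZero (A : Matrix ι ι R) (f : (Fin (k + 1) → ι) → V)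
    (e : Equiv.Perm (Fin k)) (i : Fin (k + 1) → ι) :
    zerothMul A f (i ∘ fixZero e) = zerothMul A (fun i => f (i ∘ fixZero e)) i := by
  have update_comp : ∀ j, Function.update (i ∘ fixZero e) 0 j = Function.update i 0 j ∘ fixZero e :=
    fun j => by
      rw [Function.update_comp_equiv, (fixZero e).symm_apply_eq.2 (fixZero_zero e).symm]
  simp only [zerothMul_apply, update_comp, Function.comp_apply, fixZero_zero]

/-- The family of polynomials `∑ n ≤ N, λ_0 ^ n (κ n • P)`, where the matrices act on the zeroth
index. -/
noncomputable def symbol (N : ℕ) (κ : ℕ → Matrix ι ι R) :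
    ((Fin (k + 1) → ι) → MvPolynomial (Fin k) R) →ₗ[R]
      (Fin (k + 1) → ι) → MvPolynomial (Fin (k + 1)) R :=
  ∑ n ∈ Finset.range (N + 1), (zerothMonomial n).compLeft _ ∘ₗ zerothMul (κ n)

theorem symbol_apply (N : ℕ) (κ : ℕ → Matrix ι ι R) (P : (Fin (k + 1) → ι) → MvPolynomial (Fin k) R)
    (i : Fin (k + 1) → ι) :
    symbol N κ P i = ∑ n ∈ Finset.range (N + 1), zerothMonomial n (zerothMul (κ n) P i) := by
  simp [symbol]

theorem zerothCoeff_symbol (N : ℕ) (κ : ℕ → Matrix ι ι R) (n : ℕ)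
    (P : (Fin (k + 1) → ι) → MvPolynomial (Fin k) R) (i : Fin (k + 1) → ι) :
    zerothCoeff n (symbol N κ P i) = if n ≤ N then zerothMul (κ n) P i else 0 := by
  simp [symbol_apply, zerothCoeff_zerothMonomial]

end ZerothIndex

section Skewsymmetric

variable {F : Type*} [Field F] {k l : ℕ}

theorem isSkewsym_iff {P : (Fin (k + 1) → Fin l) → MvPolynomial (Fin k) F} :
    IsSkewsym P ↔
      ∀ (e : Equiv.Perm (Fin k)) i,
        rename e (P (i ∘ fixZero e)) = (Equiv.Perm.sign e : ℤ) • P i := by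
  have comp_fixZero : ∀ (e : Equiv.Perm (Fin k)) (i : Fin (k + 1) → Fin l),
      i ∘ fixZero e = Fin.cons (i 0) fun a => i (e a).succ := fun e i =>
    funext fun a => by cases a using Fin.cases <;> simp
  simp only [IsSkewsym, comp_fixZero]

theorem _root_.IsSkewsym.zerothMul {P : (Fin (k + 1) → Fin l) → MvPolynomial (Fin k) F}
    (hP : IsSkewsym P) (A : Matrix (Fin l) (Fin l) F) : IsSkewsym (zerothMul A P) :=
  isSkewsym_iff.2 fun e i => by
    rw [zerothMul_comp_fixZero]
    simp only [zerothMul_apply, map_sum, map_smul, isSkewsym_iff.1 hP, Finset.smul_sum]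
    exact Finset.sum_congr rfl fun j _ => smul_comm _ _ _

theorem IsAlternating.isSkewsym_zerothCoeff
    {f : (Fin (k + 1) → Fin l) → MvPolynomial (Fin (k + 1)) F} (hf : IsAlternating f) (n : ℕ) :
    IsSkewsym fun i => zerothCoeff n (f i) :=
  isSkewsym_iff.2 fun e i => by
    rw [← zerothCoeff_rename_fixZero, ← act_apply, hf, sign_fixZero, Pi.smul_apply, map_zsmul]

theorem _root_.IsSkewsym.act_symbol {P : (Fin (k + 1) → Fin l) → MvPolynomial (Fin k) F}
    (hP : IsSkewsym P) (N : ℕ) (κ : ℕ → Matrix (Fin l) (Fin l) F) (e : Equiv.Perm (Fin k)) :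
    act (fixZero e) (symbol N κ P) = (Equiv.Perm.sign e : ℤ) • symbol N κ P := by
  ext1 i
  simp only [act_apply, Pi.smul_apply, symbol_apply, map_sum, Finset.smul_sum,
    rename_fixZero_zerothMonomial, isSkewsym_iff.1 (hP.zerothMul _), map_zsmul]

theorem _root_.IsSkewsym.isAlternating_cosetSkew_symbol
    {P : (Fin (k + 1) → Fin l) → MvPolynomial (Fin k) F} (hP : IsSkewsym P)
    (N : ℕ) (κ : ℕ → Matrix (Fin l) (Fin l) F) : IsAlternating (cosetSkew (symbol N κ P)) :=
  isAlternating_cosetSkew (hP.act_symbol N κ)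

end Skewsymmetric

section TotalSkewsymmetrization

variable {F ι : Type*} [Field F] {δ : Derivation ℤ F F} {k l : ℕ}

theorem compLeft_totalDer_act (σ : Equiv.Perm (Fin k))
    (f : (Fin k → ι) → MvPolynomial (Fin k) F) :
    (totalDer δ k).compLeft _ (act σ f) = act σ ((totalDer δ k).compLeft _ f) :=
  funext fun _ => totalDer_rename _ _

theorem compLeft_totalDer_injective :
    Function.Injective ((totalDer δ (k + 1)).compLeft ι) :=
  totalDer_injective.comp_left

theorem isAlternating_compLeft_totalDer_iff {f : (Fin (k + 1) → ι) → MvPolynomial (Fin (k + 1)) F} :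
    IsAlternating ((totalDer δ (k + 1)).compLeft _ f) ↔ IsAlternating f := by
  refine forall_congr' fun σ => ?_
  rw [← compLeft_totalDer_act, ← map_zsmul, compLeft_totalDer_injective.eq_iff]

theorem rename_swap_zerothMonomial_monomial (a : Fin k) (m : Fin k →₀ ℕ) (c : F) :
    rename (Equiv.swap 0 a.succ) (zerothMonomial 0 (monomial m c)) =
      zerothMonomial (m a) (monomial (m.erase a) c) := by
  rw [zerothMonomial_monomial, zerothMonomial_monomial, rename_monomial,
    ← Finsupp.equivMapDomain_eq_mapDomain]
  refine congrArg (monomial · c) (Finsupp.ext fun b => ?_)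
  rw [Finsupp.equivMapDomain_apply, Equiv.symm_swap]
  cases b using Fin.cases with
  | zero => simp
  | succ b =>
    rcases eq_or_ne b a with rfl | hba
    · simp
    · simp [Equiv.swap_apply_of_ne_of_ne, hba, Finsupp.erase_ne]

theorem tauAct_eq_reduce_rename (a : Fin k) (T : (Fin (k + 1) → Fin l) → MvPolynomial (Fin k) F)
    (i : Fin (k + 1) → Fin l) :
    tauAct δ a T i =
      reduce δ k
        (rename (Equiv.swap 0 a.succ) (zerothMonomial 0 (T (i ∘ Equiv.swap 0 a.succ)))) := by
  rw [tauAct, ← Function.comp_def]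
  conv_rhs => rw [← support_sum_monomial_coeff (T (i ∘ Equiv.swap 0 a.succ))]
  simp only [map_sum, rename_swap_zerothMonomial_monomial, reduce_zerothMonomial, iterate_lamZero]

theorem tauAct_reduce (a : Fin k) (f : (Fin (k + 1) → Fin l) → MvPolynomial (Fin (k + 1)) F)
    (i : Fin (k + 1) → Fin l) :
    tauAct δ a ((reduce δ k).compLeft _ f) i = reduce δ k (act (Equiv.swap 0 a.succ) f i) := by
  obtain ⟨P, hP⟩ := sub_zerothMonomial_reduce_mem_range (δ := δ) (f (i ∘ Equiv.swap 0 a.succ))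
  rw [tauAct_eq_reduce_rename, act_apply, eq_comm, ← sub_eq_zero, ← map_sub, ← map_sub,
    LinearMap.compLeft_apply, Function.comp_apply, ← hP, ← totalDer_rename, reduce_totalDer]

theorem totSkew_reduce_eq_zero_iff [CharZero F]
    (f : (Fin (k + 1) → Fin l) → MvPolynomial (Fin (k + 1)) F) :
    totSkew δ ((reduce δ k).compLeft _ f) = 0 ↔
      ∃ g, (totalDer δ (k + 1)).compLeft _ g = cosetSkew f := by
  have totSkew_apply : ∀ i, totSkew δ ((reduce δ k).compLeft _ f) i =
      ((k : F) + 1)⁻¹ • reduce δ k (cosetSkew f i) := fun i => by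
    simp only [totSkew, tauAct_reduce, cosetSkew_apply, map_sub, map_sum]
    rfl
  simp only [funext_iff, totSkew_apply, Pi.zero_apply, smul_eq_zero_iff_right
    (inv_ne_zero (Nat.cast_add_one_ne_zero (R := F) k)), reduce_eq_zero_iff, Classical.skolem]
  rfl

/-- The coefficients, up to the signs `(-1) ^ m`, of the formal adjoint of the matrix differential
operator with coefficients `K`. -/
noncomputable def adjointMatrix (δ : Derivation ℤ F F) (N : ℕ) (K : ι → ι → ℕ → F) (m : ℕ) :
    Matrix ι ι F :=
  Matrix.of fun i j => adjointCoeff δ N (fun n => (-1) ^ n * K i j n) m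

theorem isUnit_adjointMatrix_self [Fintype ι] [DecidableEq ι] {N : ℕ} {K : ι → ι → ℕ → F}
    (hK : IsUnit (Matrix.of fun i j => K i j N)) : IsUnit (adjointMatrix δ N K N) := by
  have : adjointMatrix δ N K N = (-1 : Fˣ) ^ N • Matrix.of fun i j => K i j N := by
    ext i j
    simp [adjointMatrix, adjointCoeff_self, Units.smul_def]
  exact this ▸ hK.smul _

theorem kCirc_eq_reduce_symbol (N : ℕ) (K : Fin l → Fin l → ℕ → F)
    (P : (Fin (k + 1) → Fin l) → MvPolynomial (Fin k) F) :
    kCirc δ N K P = (reduce δ k).compLeft _ (symbol N (adjointMatrix δ N K) P) := by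
  ext1 i
  have adjoint : ∀ j q, ∑ n ∈ Finset.range (N + 1), C (K (i 0) j n) * (eOp δ)^[n] q =
      ∑ m ∈ Finset.range (N + 1),
        ((-totalDer δ k) ^ m) (adjointMatrix δ N K m (i 0) j • q) := fun j q => by
    simp only [adjointMatrix, Matrix.of_apply, ← isConnection_totalDer.sum_smul_neg_pow_apply]
    refine Finset.sum_congr rfl fun n _ => ?_
    rcases n.even_or_odd with hn | hn <;>
      simp [iterate_eOp, C_mul', hn.neg_pow]
  simp only [kCirc, adjoint, LinearMap.compLeft_apply, Function.comp_apply, symbol_apply, map_sum,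
    reduce_zerothMonomial, zerothMul_apply]
  exact Finset.sum_comm

end TotalSkewsymmetrization

end Families

section DegreeBound

open MvPolynomial

variable {R ι : Type*} [CommRing R] {n k N : ℕ}

/-- The polynomials whose degree in each variable is less than `N`. -/
noncomputable def degLT (R : Type*) [CommSemiring R] (n N : ℕ) :
    Submodule R (MvPolynomial (Fin n) R) :=
  restrictSupport R {m | ∀ a, m a < N}

theorem mem_degLT {Q : MvPolynomial (Fin n) R} :
    Q ∈ degLT R n N ↔ ∀ m a, N ≤ m a → coeff m Q = 0 := by
  simp only [degLT, mem_restrictSupport_iff, Set.subset_def, Finset.mem_coe, mem_support_iff,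
    Set.mem_ofPred_eq]
  exact forall_congr' fun m =>
    ⟨fun h a hm => by_contra fun hc => (h hc a).not_ge hm, fun h hm a => not_le.1 (hm ∘ h a)⟩

theorem zerothCoeff_eq_zero_of_mem_degLT {Q : MvPolynomial (Fin (k + 1)) R}
    (hQ : Q ∈ degLT R (k + 1) N) {m : ℕ} (hm : N ≤ m) : zerothCoeff m Q = 0 := by
  ext p
  rw [coeff_zerothCoeff, mem_degLT.1 hQ _ 0 (by simpa using hm), coeff_zero]

theorem zerothCoeff_mem_degLT {Q : MvPolynomial (Fin (k + 1)) R}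
    (hQ : Q ∈ degLT R (k + 1) N) (m : ℕ) : zerothCoeff m Q ∈ degLT R k N :=
  mem_degLT.2 fun p a hp => by
    rw [coeff_zerothCoeff, mem_degLT.1 hQ _ a.succ (by simpa using hp)]

theorem eq_zero_of_mem_degLT_zero {Q : MvPolynomial (Fin (k + 1)) R}
    (hQ : Q ∈ degLT R (k + 1) 0) : Q = 0 := by
  ext m
  rw [mem_degLT.1 hQ m 0 (Nat.zero_le _), coeff_zero]

theorem IsAlternating.mem_degLT {f : (Fin (k + 1) → ι) → MvPolynomial (Fin (k + 1)) R}
    (hf : IsAlternating f) (h : ∀ i, ∀ m ≥ N, zerothCoeff m (f i) = 0) (i : Fin (k + 1) → ι) :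
    f i ∈ degLT R (k + 1) N :=
  DiffOp.mem_degLT.2 fun m a hm => by
    have swap_coeff := congrArg (coeff m) (congrFun (hf (Equiv.swap 0 a)) i)
    rw [act_apply, coeff_rename_equiv, coeff_eq_coeff_zerothCoeff, h _ _ (by simpa using hm),
      coeff_zero, Pi.smul_apply, coeff_smul] at swap_coeff
    exact (smul_eq_zero_iff_eq (Equiv.Perm.sign (Equiv.swap 0 a))).1 swap_coeff.symm

theorem zerothMul_mem_degLT [Fintype ι] {P : (Fin (k + 1) → ι) → MvPolynomial (Fin k) R}
    (hP : ∀ i, P i ∈ degLT R k N) (A : Matrix ι ι R) (i : Fin (k + 1) → ι) :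
    zerothMul A P i ∈ degLT R k N := by
  rw [zerothMul_apply]
  exact sum_mem fun j _ => Submodule.smul_mem _ _ (hP _)

theorem zerothCoeff_cosetSkew_symbol [Fintype ι] {P : (Fin (k + 1) → ι) → MvPolynomial (Fin k) R}
    (hP : ∀ i, P i ∈ degLT R k N) (κ : ℕ → Matrix ι ι R) {m : ℕ} (hm : N ≤ m)
    (i : Fin (k + 1) → ι) :
    zerothCoeff m (cosetSkew (symbol N κ P) i) = zerothCoeff m (symbol N κ P i) := by
  have zerothCoeff_act_swap : ∀ a : Fin k,
      zerothCoeff m (act (Equiv.swap 0 a.succ) (symbol N κ P) i) = 0 := fun a => by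
    ext p
    have hp : N ≤ ((p.cons m).equivMapDomain (Equiv.swap 0 a.succ)).tail a := by
      rw [Finsupp.tail_apply, Finsupp.equivMapDomain_apply]
      simpa using hm
    rw [coeff_zerothCoeff, act_apply, coeff_rename_equiv, coeff_eq_coeff_zerothCoeff,
      zerothCoeff_symbol, Equiv.symm_swap, coeff_zero]
    split_ifs
    · exact mem_degLT.1 (zerothMul_mem_degLT hP _ _) _ a hp
    · exact coeff_zero _
  rw [cosetSkew_apply, map_sub, map_sum, Finset.sum_eq_zero fun a _ => zerothCoeff_act_swap a,
    sub_zero]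

variable (R ι n N) in
/-- The alternating families of polynomials whose degree in each variable is less than `N`. -/
def alternatingFamilies : Submodule R ((Fin n → ι) → MvPolynomial (Fin n) R) where
  carrier := {f | IsAlternating f ∧ ∀ i, f i ∈ degLT R n N}
  zero_mem' := ⟨fun σ => by rw [map_zero, smul_zero], fun _ => zero_mem _⟩
  add_mem' := fun ⟨hf, hf'⟩ ⟨hg, hg'⟩ =>
    ⟨fun σ => by rw [map_add, hf, hg, smul_add], fun i => add_mem (hf' i) (hg' i)⟩
  smul_mem' := fun c _ ⟨hf, hf'⟩ =>
    ⟨fun σ => by rw [map_smul, hf, smul_comm], fun i => Submodule.smul_mem _ c (hf' i)⟩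

end DegreeBound

section SolutionConnection

variable {F : Type*} [Field F] {δ : Derivation ℤ F F} {k l N : ℕ}
  {κ : ℕ → Matrix (Fin l) (Fin l) F}
  {f : (Fin (k + 1) → Fin l) → MvPolynomial (Fin (k + 1)) F}
  {P : (Fin (k + 1) → Fin l) → MvPolynomial (Fin k) F}

theorem zerothCoeff_totalDer_of_mem_degLT {Q : MvPolynomial (Fin (k + 1)) F}
    (hQ : Q ∈ degLT F (k + 1) N) :
    zerothCoeff N (totalDer δ (k + 1) Q) = zerothCoeff (N - 1) Q := by
  cases N with
  | zero => simp [eq_zero_of_mem_degLT_zero hQ]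
  | succ N =>
    rw [zerothCoeff_succ_totalDer, zerothCoeff_eq_zero_of_mem_degLT hQ le_rfl, map_zero, add_zero,
      Nat.add_sub_cancel]

/-- The operator `P` recovered from a solution `f` of `totalDer f = cosetSkew (symbol N κ P)`, by
comparing the coefficients of `λ_0 ^ N`. -/
noncomputable def leadingPart (N : ℕ) (κ : ℕ → Matrix (Fin l) (Fin l) F) :
    ((Fin (k + 1) → Fin l) → MvPolynomial (Fin (k + 1)) F) →ₗ[F]
      (Fin (k + 1) → Fin l) → MvPolynomial (Fin k) F :=
  zerothMul (κ N)⁻¹ ∘ₗ (zerothCoeff (N - 1)).compLeft _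

theorem isSkewsym_leadingPart (hf : IsAlternating f) : IsSkewsym (leadingPart N κ f) :=
  (hf.isSkewsym_zerothCoeff (N - 1)).zerothMul _

theorem leadingPart_mem_degLT (hf : ∀ i, f i ∈ degLT F (k + 1) N) (i : Fin (k + 1) → Fin l) :
    leadingPart N κ f i ∈ degLT F k N :=
  zerothMul_mem_degLT (fun i => zerothCoeff_mem_degLT (hf i) (N - 1)) _ i

theorem leadingPart_eq (hκ : IsUnit (κ N)) (hf : ∀ i, f i ∈ degLT F (k + 1) N)
    (hP : ∀ i, P i ∈ degLT F k N)
    (h : (totalDer δ (k + 1)).compLeft _ f = cosetSkew (symbol N κ P)) : leadingPart N κ f = P := by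
  have zerothCoeff_eq : (zerothCoeff (N - 1)).compLeft _ f = zerothMul (κ N) P := funext fun i => by
    rw [LinearMap.compLeft_apply, Function.comp_apply, ← zerothCoeff_totalDer_of_mem_degLT (hf i),
      show totalDer δ (k + 1) (f i) = _ from congrFun h i, zerothCoeff_cosetSkew_symbol hP κ le_rfl,
      zerothCoeff_symbol, if_pos le_rfl]
  rw [leadingPart, LinearMap.comp_apply, zerothCoeff_eq, zerothMul_zerothMul,
    Matrix.nonsing_inv_mul _ ((Matrix.isUnit_iff_isUnit_det _).1 hκ), zerothMul_one]

theorem mem_alternatingFamilies_of_totalDer_eq (hs : IsSkewsym P) (hP : ∀ i, P i ∈ degLT F k N)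
    (h : (totalDer δ (k + 1)).compLeft _ f = cosetSkew (symbol N κ P)) :
    f ∈ alternatingFamilies F (Fin l) (k + 1) N := by
  have alternating : IsAlternating f := isAlternating_compLeft_totalDer_iff.1
    (h ▸ hs.isAlternating_cosetSkew_symbol N κ)
  refine ⟨alternating, alternating.mem_degLT fun i =>
    zerothCoeff_eq_zero_of_totalDer (δ := δ) fun m hm => ?_⟩
  rw [show totalDer δ (k + 1) (f i) = _ from congrFun h i,
    zerothCoeff_cosetSkew_symbol hP κ hm.le, zerothCoeff_symbol, if_neg hm.not_ge]

/-- The operator `f ↦ totalDer f - cosetSkew (symbol N κ P)` with `P` the leading part of `f`. It is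
a connection whose horizontal families correspond to the solutions `P`. -/
noncomputable def solutionOp (δ : Derivation ℤ F F) (N : ℕ) (κ : ℕ → Matrix (Fin l) (Fin l) F) :
    Module.End ℤ ((Fin (k + 1) → Fin l) → MvPolynomial (Fin (k + 1)) F) :=
  (totalDer δ (k + 1)).compLeft _ -
    (cosetSkew ∘ₗ symbol N κ ∘ₗ leadingPart N κ).restrictScalars ℤ

theorem isConnection_solutionOp : IsConnection δ (solutionOp (k := k) δ N κ) :=
  (isConnection_totalDer.compLeft _).sub_linearMap _

theorem solutionOp_mem_alternatingFamilies (hκ : IsUnit (κ N))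
    (hf : f ∈ alternatingFamilies F (Fin l) (k + 1) N) :
    solutionOp δ N κ f ∈ alternatingFamilies F (Fin l) (k + 1) N := by
  have alternating : IsAlternating (solutionOp δ N κ f) :=
    (isAlternating_compLeft_totalDer_iff.2 hf.1).sub
      ((isSkewsym_leadingPart hf.1).isAlternating_cosetSkew_symbol N κ)
  have zerothMul_leadingPart : zerothMul (κ N) (leadingPart N κ f) =
      (zerothCoeff (N - 1)).compLeft _ f := by
    rw [leadingPart, LinearMap.comp_apply, zerothMul_zerothMul,
      Matrix.mul_nonsing_inv _ ((Matrix.isUnit_iff_isUnit_det _).1 hκ), zerothMul_one]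
  refine ⟨alternating, alternating.mem_degLT fun i m hm => ?_⟩
  change zerothCoeff m (totalDer δ (k + 1) (f i) - cosetSkew (symbol N κ (leadingPart N κ f)) i) = 0
  rw [map_sub, zerothCoeff_cosetSkew_symbol (leadingPart_mem_degLT hf.2) κ hm, zerothCoeff_symbol]
  rcases hm.eq_or_lt with rfl | hm
  · rw [if_pos le_rfl, zerothMul_leadingPart, zerothCoeff_totalDer_of_mem_degLT (hf.2 i)]
    exact sub_self _
  · obtain ⟨m, rfl⟩ := Nat.exists_eq_succ_of_ne_zero hm.ne_bot
    rw [if_neg hm.not_ge, zerothCoeff_succ_totalDer,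
      zerothCoeff_eq_zero_of_mem_degLT (hf.2 i) (Nat.lt_succ_iff.1 hm),
      zerothCoeff_eq_zero_of_mem_degLT (hf.2 i) hm.le, map_zero, add_zero, sub_zero]

end SolutionConnection

section Dimension

open MvPolynomial

section AlternatingMap

variable {R ι : Type*} [CommRing R] [DecidableEq ι] {n N : ℕ}

/-- The standard basis vectors of `ι × Fin N → R`, extended by zero to all `(i, m) ∈ ι × ℕ`. -/
def stdVec (R : Type*) [CommRing R] (N : ℕ) (i : ι) (m : ℕ) : ι × Fin N → R :=
  fun p => if p.1 = i ∧ (p.2 : ℕ) = m then 1 else 0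

theorem stdVec_of_le {m : ℕ} (hm : N ≤ m) (i : ι) : stdVec R N i m = 0 :=
  funext fun p => if_neg fun hp => (hp.2 ▸ p.2.is_lt).not_ge hm

theorem stdVec_val (p : ι × Fin N) : stdVec R N p.1 p.2 = Pi.single p 1 := by
  ext q
  simp [stdVec, Pi.single_apply, Prod.ext_iff, Fin.ext_iff]

variable (R ι n N) in
/-- The family of polynomials whose coefficients are the values of an alternating map at the
standard basis vectors. -/
noncomputable def familyOfAlternatingMap :
    ((ι × Fin N → R) [⋀^Fin n]→ₗ[R] R) →ₗ[R] (Fin n → ι) → MvPolynomial (Fin n) R where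
  toFun ω i := ∑ m : Fin n → Fin N,
    monomial (Finsupp.equivFunOnFinite.symm fun a => (m a : ℕ)) (ω fun a => stdVec R N (i a) (m a))
  map_add' _ _ := by
    ext1
    simp [Finset.sum_add_distrib]
  map_smul' _ _ := by
    ext1
    simp [Finset.smul_sum, smul_monomial]

theorem coeff_familyOfAlternatingMap (ω : (ι × Fin N → R) [⋀^Fin n]→ₗ[R] R) (i : Fin n → ι)
    (m : Fin n →₀ ℕ) :
    coeff m (familyOfAlternatingMap R ι n N ω i) = ω fun a => stdVec R N (i a) (m a) := by
  change coeff m (∑ _, _) = _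
  simp only [coeff_sum, coeff_monomial, Equiv.symm_apply_eq]
  by_cases h : ∀ a, m a < N
  · rw [Finset.sum_eq_single (fun a => ⟨m a, h a⟩) (fun p _ hp => if_neg fun hpm => hp ?_)
      (by simp)]
    · exact if_pos rfl
    · exact funext fun a => Fin.ext (congrFun hpm a)
  · obtain ⟨a, ha⟩ := not_forall.1 h
    rw [ω.map_coord_zero a (stdVec_of_le (not_lt.1 ha) _)]
    refine Finset.sum_eq_zero fun p _ => if_neg fun hp => ha ?_
    have p_eq : (p a : ℕ) = m a := congrFun hp a
    exact p_eq ▸ (p a).is_lt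

theorem familyOfAlternatingMap_mem (ω : (ι × Fin N → R) [⋀^Fin n]→ₗ[R] R) :
    familyOfAlternatingMap R ι n N ω ∈ alternatingFamilies R ι n N := by
  refine ⟨fun σ => funext fun i => MvPolynomial.ext _ _ fun m => ?_, fun i =>
    mem_degLT.2 fun m a hm => ?_⟩
  · rw [act_apply, coeff_rename_equiv, coeff_familyOfAlternatingMap, Pi.smul_apply, coeff_smul,
      coeff_familyOfAlternatingMap]
    exact ω.map_perm (fun a => stdVec R N (i a) (m a)) σ
  · rw [coeff_familyOfAlternatingMap, ω.map_coord_zero a (stdVec_of_le hm _)]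

theorem familyOfAlternatingMap_injective [Finite ι] :
    Function.Injective (familyOfAlternatingMap R ι n N) := by
  intro ω η h
  refine Module.Basis.ext_alternating (Pi.basisFun R (ι × Fin N)) fun v _ => ?_
  have coeff_eq := congrArg (coeff (Finsupp.equivFunOnFinite.symm fun a => ((v a).2 : ℕ)))
    (congrFun h fun a => (v a).1)
  simpa [coeff_familyOfAlternatingMap, stdVec_val] using coeff_eq

end AlternatingMap

section CoeffMultilinear

variable {R ι : Type*} [CommRing R] [Fintype ι] {n N : ℕ}

/-- The multilinear map whose values at the standard basis vectors are the coefficients of a family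
of polynomials. -/
noncomputable def coeffMultilinear (N : ℕ) (f : (Fin n → ι) → MvPolynomial (Fin n) R) :
    MultilinearMap R (fun _ : Fin n => ι × Fin N → R) R :=
  ∑ j : Fin n → ι × Fin N,
    coeff (Finsupp.equivFunOnFinite.symm fun a => ((j a).2 : ℕ)) (f fun a => (j a).1) •
      (MultilinearMap.mkPiAlgebra R (Fin n) R).compLinearMap fun a => LinearMap.proj (j a)

variable [DecidableEq ι]

theorem coeffMultilinear_stdVec {f : (Fin n → ι) → MvPolynomial (Fin n) R}
    (hf : ∀ i, f i ∈ degLT R n N) (i : Fin n → ι) (m : Fin n →₀ ℕ) :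
    coeffMultilinear N f (fun a => stdVec R N (i a) (m a)) = coeff m (f i) := by
  by_cases h : ∀ a, m a < N
  · have stdVec_eq : ∀ a, stdVec R N (i a) (m a) = Pi.single (i a, ⟨m a, h a⟩) 1 := fun a =>
      stdVec_val (i a, ⟨m a, h a⟩)
    simp only [coeffMultilinear, stdVec_eq, sum_apply, smul_apply,
      MultilinearMap.compLinearMap_apply, MultilinearMap.mkPiAlgebra_apply, LinearMap.proj_apply]
    rw [Finset.sum_eq_single (fun a => (i a, ⟨m a, h a⟩)) (fun j _ hj => ?_) (by simp)]
    · simp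
    · obtain ⟨a, ha⟩ := Function.ne_iff.1 hj
      rw [Finset.prod_eq_zero (Finset.mem_univ a) (Pi.single_eq_of_ne ha 1), smul_zero]
  · obtain ⟨a, ha⟩ := not_forall.1 h
    rw [mem_degLT.1 (hf i) m a (not_lt.1 ha),
      (coeffMultilinear N f).map_coord_zero a (stdVec_of_le (not_lt.1 ha) _)]

theorem alternatization_coeffMultilinear_stdVec {f : (Fin n → ι) → MvPolynomial (Fin n) R}
    (hf : f ∈ alternatingFamilies R ι n N) (i : Fin n → ι) (m : Fin n →₀ ℕ) :
    MultilinearMap.alternatization (coeffMultilinear N f) (fun a => stdVec R N (i a) (m a)) =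
      (n.factorial : R) * coeff m (f i) := by
  have coeff_perm : ∀ σ : Equiv.Perm (Fin n),
      coeffMultilinear N f (fun a => stdVec R N (i (σ a)) (m (σ a))) =
        (Equiv.Perm.sign σ : ℤ) • coeff m (f i) := fun σ => by
    rw [← coeff_smul, ← Pi.smul_apply, ← hf.1 σ, act_apply, coeff_rename_equiv,
      ← coeffMultilinear_stdVec hf.2]
    rfl
  rw [MultilinearMap.alternatization_apply]
  simp only [MultilinearMap.domDomCongr_apply, coeff_perm, Units.smul_def, smul_smul,
    ← Units.val_mul, Int.units_mul_self]
  simp [Fintype.card_perm]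

end CoeffMultilinear

variable {F ι : Type*} [Field F] [CharZero F] [Finite ι] {n N : ℕ}

theorem exists_familyOfAlternatingMap_eq [DecidableEq ι]
    {f : (Fin n → ι) → MvPolynomial (Fin n) F} (hf : f ∈ alternatingFamilies F ι n N) :
    ∃ ω : (ι × Fin N → F) [⋀^Fin n]→ₗ[F] F, familyOfAlternatingMap F ι n N ω = f := by
  have := Fintype.ofFinite ι
  refine ⟨(n.factorial : F)⁻¹ • MultilinearMap.alternatization (coeffMultilinear N f),
    funext fun i => MvPolynomial.ext _ _ fun m => ?_⟩
  rw [coeff_familyOfAlternatingMap, AlternatingMap.smul_apply,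
    alternatization_coeffMultilinear_stdVec hf, smul_eq_mul,
    inv_mul_cancel_left₀ (Nat.cast_ne_zero.2 n.factorial_ne_zero)]

variable (F ι n N)

/-- The alternating families are the linear forms on an exterior power. -/
noncomputable def dualExteriorPowerEquiv :
    Module.Dual F (⋀[F]^n (ι × Fin N → F)) ≃ₗ[F] alternatingFamilies F ι n N :=
  haveI := Classical.decEq ι
  exteriorPower.alternatingMapLinearEquiv.symm.trans <|
    LinearEquiv.ofBijective
      ((familyOfAlternatingMap F ι n N).codRestrict _ familyOfAlternatingMap_mem)
      ⟨fun _ _ h => familyOfAlternatingMap_injective (congrArg Subtype.val h), fun f =>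
        (exists_familyOfAlternatingMap_eq f.2).imp fun _ h => Subtype.ext h⟩

instance finiteDimensional_alternatingFamilies :
    FiniteDimensional F (alternatingFamilies F ι n N) :=
  Module.Finite.equiv (dualExteriorPowerEquiv F ι n N)

theorem finrank_alternatingFamilies :
    Module.finrank F (alternatingFamilies F ι n N) = (N * Nat.card ι).choose n := by
  have := Fintype.ofFinite ι
  rw [← (dualExteriorPowerEquiv F ι n N).finrank_eq, Subspace.dual_finrank_eq,
    exteriorPower.finrank_eq, Module.finrank_fintype_fun_eq_card, Fintype.card_prod,
    Fintype.card_fin, mul_comm, Nat.card_eq_fintype_card]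

end Dimension

section Solutions

open MvPolynomial

variable {F : Type*} [Field F] {δ : Derivation ℤ F F} {k l N : ℕ}
  {κ : ℕ → Matrix (Fin l) (Fin l) F}

theorem solutionOp_eq_zero_iff {f : (Fin (k + 1) → Fin l) → MvPolynomial (Fin (k + 1)) F} :
    solutionOp δ N κ f = 0 ↔
      (totalDer δ (k + 1)).compLeft _ f = cosetSkew (symbol N κ (leadingPart N κ f)) :=
  sub_eq_zero

theorem exists_horizontal_equiv (hκ : IsUnit (κ N)) {C : Subfield F}
    {Sol : Submodule C ((Fin (k + 1) → Fin l) → MvPolynomial (Fin k) F)}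
    (hSol : ∀ P, P ∈ Sol ↔ IsSkewsym P ∧ (∀ i, P i ∈ degLT F k N) ∧
      ∃ f, (totalDer δ (k + 1)).compLeft _ f = cosetSkew (symbol N κ P))
    {H : Submodule C (alternatingFamilies F (Fin l) (k + 1) N)}
    (hH : ∀ f, f ∈ H ↔ solutionOp δ N κ f.1 = 0) : Nonempty (H ≃ₗ[C] Sol) := by
  let Φ : H →ₗ[C] (Fin (k + 1) → Fin l) → MvPolynomial (Fin k) F :=
    (leadingPart N κ ∘ₗ Submodule.subtype _).restrictScalars C ∘ₗ H.subtype
  have horizontal : ∀ f : H,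
      (totalDer δ (k + 1)).compLeft _ (f : alternatingFamilies F (Fin l) (k + 1) N) =
        cosetSkew (symbol N κ (Φ f)) := fun f => solutionOp_eq_zero_iff.1 ((hH _).1 f.2)
  have injective : Function.Injective Φ := fun f g hfg =>
    Subtype.ext <| Subtype.ext <| compLeft_totalDer_injective (δ := δ) <| by
      rw [horizontal, horizontal, hfg]
  have range_eq : LinearMap.range Φ = Sol := by
    ext P
    rw [hSol]
    constructor
    · rintro ⟨f, rfl⟩
      exact ⟨isSkewsym_leadingPart f.1.2.1, leadingPart_mem_degLT f.1.2.2, _, horizontal f⟩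
    · rintro ⟨hs, hdeg, f, hf⟩
      have mem := mem_alternatingFamilies_of_totalDer_eq hs hdeg hf
      have leadingPart_f := leadingPart_eq hκ mem.2 hdeg hf
      have mem_H : ⟨f, mem⟩ ∈ H := (hH _).2 (solutionOp_eq_zero_iff.2 (by rw [hf, leadingPart_f]))
      exact ⟨⟨_, mem_H⟩, leadingPart_f⟩
  exact ⟨(LinearEquiv.ofInjective Φ injective).trans (LinearEquiv.ofEq _ _ range_eq)⟩

theorem rank_solutions [CharZero F] (hδ : LinearlyClosed δ) (hκ : IsUnit (κ N)) {C : Subfield F}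
    (hC : ∀ x, x ∈ C ↔ δ x = 0)
    {Sol : Submodule C ((Fin (k + 1) → Fin l) → MvPolynomial (Fin k) F)}
    (hSol : ∀ P, P ∈ Sol ↔ IsSkewsym P ∧ (∀ i, P i ∈ degLT F k N) ∧
      ∃ f, (totalDer δ (k + 1)).compLeft _ f = cosetSkew (symbol N κ P)) :
    Module.rank C Sol = ((N * l).choose (k + 1) : ℕ) := by
  have connection := isConnection_solutionOp (δ := δ) (κ := κ) (N := N) (k := k) |>.restrict
    fun _ => solutionOp_mem_alternatingFamilies hκ
  let H := connection.horizontal fun x => (hC x).1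
  obtain ⟨e⟩ := exists_horizontal_equiv hκ hSol (H := H) fun f => Subtype.ext_iff
  rw [← e.rank_eq, connection.rank_horizontal hδ hC, finrank_alternatingFamilies, Nat.card_fin]

end Solutions

end DiffOp

/-- Let `F` be a linearly closed differential field of characteristic zero with constants
`C`, and `K` an `ℓ×ℓ` matrix differential operator of order `N` with invertible leading
coefficient.  The skewsymmetric `k`-differential operators `P` on `F^ℓ` whose entries
have degree at most `N−1` in each variable and which satisfy `⟨K∘P⟩⁻ = 0` form a
`C`-vector space of dimension `Nℓ choose (k+1)`. -/
theorem stmt_11 (F : Type*) [Field F] [CharZero F] (d : F → F) (hd : IsDerivation d)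
    (hlc : LinearlyClosed d)
    (C : Subfield F) (hC : ∀ x : F, x ∈ C ↔ d x = 0)
    (k l N : ℕ) (hl : 0 < l)
    (K : Fin l → Fin l → ℕ → F)
    (hK : IsUnit (Matrix.of fun i j : Fin l => K i j N))
    (Sol : Submodule C ((Fin (k + 1) → Fin l) → MvPolynomial (Fin k) F))
    (hSol : ∀ P : (Fin (k + 1) → Fin l) → MvPolynomial (Fin k) F, P ∈ Sol ↔
      (IsSkewsym P ∧
       (∀ i, ∀ m ∈ (P i).support, ∀ α : Fin k, m α < N) ∧
       totSkew d (kCirc d N K P) = 0)) :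
    Module.rank C Sol = ((N * l).choose (k + 1) : Cardinal) := by
  obtain ⟨δ, rfl⟩ := hd.exists_derivation
  have hκ : IsUnit (DiffOp.adjointMatrix δ N K N) := DiffOp.isUnit_adjointMatrix_self hK
  refine DiffOp.rank_solutions hlc hκ hC fun P => ?_
  rw [hSol, DiffOp.kCirc_eq_reduce_symbol, DiffOp.totSkew_reduce_eq_zero_iff]
  rfl
end
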